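/- arXiv:1208.6328 — 2 statements merged into one kernel-verified Lean document; each statement's English description precedes it below -/
import Mathlib

section
/- Let 1 ≤ p ≤ ∞ and α satisfy: 1/2 < α ≤ 1 if p = 1; 1 − 1/(2p) < α < 3/2 − 1/(2p) if 1 < p < ∞; 1 ≤ α < 3/2 if p = ∞. Then there is a constant C, independent of f and t, such that for every f with ‖f(x)(1−x²)^α‖_{L^p[−1,1]} < ∞ and every t ∈ (−π, π), ‖T̂_t(f,·)(x)(1−x²)^α‖_{L^p} ≤ (C / cos⁴(t/2)) · ‖f(x)(1−x²)^α‖_{L^p}, where T̂_t(f,x) = T_{cos t}(f,x). -/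
open MeasureTheory Real Set
open scoped ENNReal

noncomputable section

/-- `R = x y − z √(1−x²) √(1−y²)`. -/
def Rker (x y z : ℝ) : ℝ := x * y - z * Real.sqrt (1 - x ^ 2) * Real.sqrt (1 - y ^ 2)

/-- The kernel `B_y(x, z, R)` of the asymmetric generalised translation operator. -/
def Bker (y x z : ℝ) : ℝ :=
  2 * (Real.sqrt (1 - x ^ 2) * y + z * x * Real.sqrt (1 - y ^ 2) +
      Real.sqrt (1 - x ^ 2) * (1 - y) * (1 - z ^ 2)) ^ 2 - (1 - Rker x y z ^ 2)

/-- The asymmetric generalised translation operator `T_y(f, x)`. -/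
def Tgen (y : ℝ) (f : ℝ → ℝ) (x : ℝ) : ℝ :=
  (4 / (Real.pi * (1 - x ^ 2) * (1 + y) ^ 2)) *
    ∫ z in (-1 : ℝ)..1, Bker y x z * f (Rker x y z) / Real.sqrt (1 - z ^ 2)

/-- The Jacobi differential operator `D_{x,2,2} = (1−x²) d²/dx² − 6x d/dx`. -/
def Dop (f : ℝ → ℝ) (x : ℝ) : ℝ := (1 - x ^ 2) * deriv (deriv f) x - 6 * x * deriv f x

/-- Weighted `L^p` norm `‖f(x) (1−x²)^α‖_p` on `[−1,1]`. -/
def wnorm (p : ℝ≥0∞) (α : ℝ) (f : ℝ → ℝ) : ℝ≥0∞ :=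
  eLpNorm (fun x => f x * (1 - x ^ 2) ^ α) p (volume.restrict (Set.Icc (-1 : ℝ) 1))

/-- `h` is absolutely continuous on every closed subinterval of `(−1,1)`:
it is the integral of its derivative there. -/
def LocAC (h : ℝ → ℝ) : Prop :=
  ∀ a b : ℝ, -1 < a → a ≤ b → b < 1 →
    IntervalIntegrable (deriv h) MeasureTheory.volume a b ∧
      ∀ x ∈ Set.Icc a b, h x = h a + ∫ t in a..x, deriv h t

/-- The system `P` consists of the Jacobi polynomials for the weight `(1−x)^a (1+x)^b`,
normalised by `P n 1 = 1`. -/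
def IsJacobiSystem (a b : ℝ) (P : ℕ → ℝ → ℝ) : Prop :=
  (∀ n : ℕ, ∃ q : Polynomial ℝ, q.natDegree = n ∧ ∀ x, P n x = q.eval x) ∧
  (∀ m n : ℕ, m ≠ n →
    ∫ x in (-1 : ℝ)..1, P m x * P n x * (1 - x) ^ a * (1 + x) ^ b = 0) ∧
  (∀ n : ℕ, P n 1 = 1)

/-- Conditions on `p` and `α` in the main theorems. -/
def ParamOK (p : ℝ≥0∞) (α : ℝ) : Prop :=
  1 ≤ p ∧
  (p = 1 → 1 / 2 < α ∧ α ≤ 1) ∧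
  (1 < p → p ≠ ⊤ → 1 - 1 / (2 * p.toReal) < α ∧ α < 3 / 2 - 1 / (2 * p.toReal)) ∧
  (p = ⊤ → 1 ≤ α ∧ α < 3 / 2)

/-- Best approximation of `f` by algebraic polynomials of degree at most `n − 1`. -/
def bestE (p : ℝ≥0∞) (α : ℝ) (n : ℕ) (f : ℝ → ℝ) : ℝ≥0∞ :=
  ⨅ (q : Polynomial ℝ) (_ : q.natDegree ≤ n - 1), wnorm p α (fun x => f x - q.eval x)

/-- The generalised modulus of smoothness `ω(f, δ)`. -/
def wmod (p : ℝ≥0∞) (α : ℝ) (f : ℝ → ℝ) (δ : ℝ) : ℝ≥0∞ :=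
  ⨆ t ∈ Set.Icc (-δ) δ, wnorm p α (fun x => Tgen (Real.cos t) f x - f x)

/-- The Peetre K-functional between `L^p_α` and the weighted Sobolev-type space. -/
def Kfun (p : ℝ≥0∞) (α : ℝ) (f : ℝ → ℝ) (δ : ℝ) : ℝ≥0∞ :=
  ⨅ (g : ℝ → ℝ) (_ : LocAC (deriv g) ∧ wnorm p α g < ⊤ ∧ wnorm p α (Dop g) < ⊤),
    wnorm p α (fun x => f x - g x) + ENNReal.ofReal (δ ^ 2) * wnorm p α (Dop g)

/-!
Since `|B_y| ≤ 20 (1 - R²)`, the operator `T_y` is dominated by a multiple of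
`(1 + y)⁻² (1 - x²)⁻¹` times the Legendre translation of `(1 - r²) |f(r)|`. Legendre translation is
the integral operator with the *symmetric* kernel `(1 - x² - y² - r² + 2xyr)₊^(-1/2)`. The identity
`1 - R² = (1 - x²) (1 - z²) + (x √(1 - y²) + z y √(1 - x²))²` shows that Legendre translation maps
`(1 - r²)^(-γ)` to at most a constant times itself, uniformly in `y`, as soon as `0 ≤ γ < 1/2`.
The Schur test with the test functions `(1 - r²)^(-γ)` and `(1 - r²)^(-δ)` then bounds Legendre
translation on the `L^p` space with weight `(1 - r²)^(α - 1)` when `(α - 1) p = γ (p - 1) - δ`, and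
the admissible `p` and `α` are exactly those for which such `γ, δ ∈ [0, 1/2)` exist. For `p = ∞`
the bound on `(1 - r²)^(-γ)` with `γ = α - 1` is all that is needed.
-/

/-! ### The Schur test -/

section Schur

variable {X Y : Type*} [MeasurableSpace X] [MeasurableSpace Y] {μ : Measure X} {ν : Measure Y}

lemma rpow_lintegral_mul_le {p : ℝ} (hp : 1 ≤ p) {k a f : Y → ℝ≥0∞} (hk : Measurable k)
    (ha : Measurable a) (ha_ne : ∀ᵐ y ∂ν, a y ≠ 0 ∧ a y ≠ ⊤) (hf : Measurable f) :
    (∫⁻ y, k y * f y ∂ν) ^ p ≤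
      (∫⁻ y, k y * a y ∂ν) ^ (p - 1) * ∫⁻ y, k y * (a y ^ (1 - p) * f y ^ p) ∂ν := by
  have hp0 : 0 < p := by linarith
  have hq : 0 ≤ 1 - p⁻¹ := sub_nonneg.2 (inv_le_one_of_one_le₀ hp)
  have hsplit : ∀ᵐ y ∂ν, k y * f y =
      (k y * a y) ^ (1 - p⁻¹) * (k y * (a y ^ (1 - p) * f y ^ p)) ^ p⁻¹ := by
    filter_upwards [ha_ne] with y ⟨h0, htop⟩
    have hak : a y ^ (1 - p⁻¹) * a y ^ ((1 - p) * p⁻¹) = 1 := by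
      rw [← ENNReal.rpow_add _ _ h0 htop, show 1 - p⁻¹ + (1 - p) * p⁻¹ = 0 by field_simp; ring,
        ENNReal.rpow_zero]
    have hkk : k y ^ (1 - p⁻¹) * k y ^ p⁻¹ = k y := by
      rw [← ENNReal.rpow_add_of_nonneg _ _ hq (by positivity), sub_add_cancel, ENNReal.rpow_one]
    simp only [ENNReal.mul_rpow_of_nonneg _ _ hq, ENNReal.mul_rpow_of_nonneg _ _ (inv_pos.2 hp0).le,
      ← ENNReal.rpow_mul, mul_inv_cancel₀ hp0.ne', ENNReal.rpow_one]
    calc k y * f y = (k y ^ (1 - p⁻¹) * k y ^ p⁻¹) *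
          (a y ^ (1 - p⁻¹) * a y ^ ((1 - p) * p⁻¹)) * f y := by rw [hak, hkk, mul_one]
      _ = _ := by ring
  calc (∫⁻ y, k y * f y ∂ν) ^ p
      ≤ ((∫⁻ y, k y * a y ∂ν) ^ (1 - p⁻¹) *
          (∫⁻ y, k y * (a y ^ (1 - p) * f y ^ p) ∂ν) ^ p⁻¹) ^ p := by
        rw [lintegral_congr_ae hsplit]
        gcongr
        exact ENNReal.lintegral_mul_norm_pow_le (by fun_prop) (by fun_prop) hq (by positivity)
          (sub_add_cancel _ _)
    _ = _ := by
        rw [ENNReal.mul_rpow_of_nonneg _ _ hp0.le, ← ENNReal.rpow_mul, ← ENNReal.rpow_mul,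
          inv_mul_cancel₀ hp0.ne', ENNReal.rpow_one, sub_mul, inv_mul_cancel₀ hp0.ne', one_mul]

lemma rpow_mul_rpow_lintegral_mul_le {p : ℝ} (hp : 1 ≤ p) {k a f : Y → ℝ≥0∞} {A c : ℝ≥0∞}
    (hk : Measurable k) (ha : Measurable a) (ha_ne : ∀ᵐ y ∂ν, a y ≠ 0 ∧ a y ≠ ⊤)
    (hf : Measurable f) (hka : ∫⁻ y, k y * a y ∂ν ≤ A * c) :
    c ^ (1 - p) * (∫⁻ y, k y * f y ∂ν) ^ p ≤
      A ^ (p - 1) * ∫⁻ y, k y * (a y ^ (1 - p) * f y ^ p) ∂ν := by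
  have hp' : 0 ≤ p - 1 := sub_nonneg.2 hp
  have hcancel : c ^ (1 - p) * c ^ (p - 1) ≤ 1 := by
    rw [← neg_sub, ENNReal.rpow_neg, mul_comm]
    exact ENNReal.mul_inv_le_one _
  calc c ^ (1 - p) * (∫⁻ y, k y * f y ∂ν) ^ p
      ≤ c ^ (1 - p) * ((A * c) ^ (p - 1) * ∫⁻ y, k y * (a y ^ (1 - p) * f y ^ p) ∂ν) := by
        gcongr
        refine (rpow_lintegral_mul_le hp hk ha ha_ne hf).trans ?_
        gcongr
    _ = c ^ (1 - p) * c ^ (p - 1) *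
          (A ^ (p - 1) * ∫⁻ y, k y * (a y ^ (1 - p) * f y ^ p) ∂ν) := by
        rw [ENNReal.mul_rpow_of_nonneg _ _ hp']; ring
    _ ≤ A ^ (p - 1) * ∫⁻ y, k y * (a y ^ (1 - p) * f y ^ p) ∂ν :=
        mul_le_of_le_one_left' hcancel

theorem lintegral_rpow_lintegral_mul_le_of_schur [SFinite μ] [SFinite ν] {p : ℝ} (hp : 1 ≤ p)
    {k : X → Y → ℝ≥0∞} (hk : Measurable (Function.uncurry k))
    {a b f : Y → ℝ≥0∞} {a' b' : X → ℝ≥0∞} {A B : ℝ≥0∞} (ha : Measurable a) (hb : Measurable b)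
    (hb' : Measurable b') (hf : Measurable f) (ha_ne : ∀ᵐ y ∂ν, a y ≠ 0 ∧ a y ≠ ⊤)
    (hka : ∀ᵐ x ∂μ, ∫⁻ y, k x y * a y ∂ν ≤ A * a' x)
    (hkb : ∀ᵐ y ∂ν, ∫⁻ x, k x y * b' x ∂μ ≤ B * b y) :
    ∫⁻ x, a' x ^ (1 - p) * b' x * (∫⁻ y, k x y * f y ∂ν) ^ p ∂μ ≤
      A ^ (p - 1) * B * ∫⁻ y, a y ^ (1 - p) * b y * f y ^ p ∂ν := by
  calc ∫⁻ x, a' x ^ (1 - p) * b' x * (∫⁻ y, k x y * f y ∂ν) ^ p ∂μ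
      ≤ ∫⁻ x, A ^ (p - 1) * ∫⁻ y, b' x * (k x y * (a y ^ (1 - p) * f y ^ p)) ∂ν ∂μ := by
        refine lintegral_mono_ae ?_
        filter_upwards [hka] with x hx
        rw [lintegral_const_mul _ (by fun_prop), mul_right_comm, mul_comm _ (b' x),
          mul_left_comm (A ^ (p - 1))]
        gcongr b' x * ?_
        exact rpow_mul_rpow_lintegral_mul_le hp (by fun_prop) ha ha_ne hf hx
    _ = A ^ (p - 1) * ∫⁻ y, a y ^ (1 - p) * (∫⁻ x, k x y * b' x ∂μ) * f y ^ p ∂ν := by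
        rw [lintegral_const_mul _ (by fun_prop), lintegral_lintegral_swap (by fun_prop)]
        congr! 3 with y
        rw [mul_right_comm, ← lintegral_const_mul _ (by fun_prop)]
        exact lintegral_congr fun x => by ring
    _ ≤ A ^ (p - 1) * ∫⁻ y, B * (a y ^ (1 - p) * b y * f y ^ p) ∂ν := by
        gcongr _ * ?_
        refine lintegral_mono_ae ?_
        filter_upwards [hkb] with y hy
        calc a y ^ (1 - p) * (∫⁻ x, k x y * b' x ∂μ) * f y ^ p
            ≤ a y ^ (1 - p) * (B * b y) * f y ^ p := by gcongr
          _ = B * (a y ^ (1 - p) * b y * f y ^ p) := by ring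
    _ = A ^ (p - 1) * B * ∫⁻ y, a y ^ (1 - p) * b y * f y ^ p ∂ν := by
        rw [lintegral_const_mul _ (by fun_prop), mul_assoc]

/-- `∫⁻` is a lower integral, so it sees a non-measurable `F` only through a measurable
minorant. -/
lemma exists_measurable_le_forall_lintegral_mul_eq [SigmaFinite μ] (F : X → ℝ≥0∞) :
    ∃ G, Measurable G ∧ G ≤ F ∧ ∀ k : X → ℝ≥0∞, Measurable k → (∀ᵐ x ∂μ, k x ≠ ⊤) →
      ∫⁻ x, k x * F x ∂μ = ∫⁻ x, k x * G x ∂μ := by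
  obtain ⟨G, hG, hGF, hG_eq⟩ := exists_measurable_le_forall_setLIntegral_eq μ F
  have hG_max : ∀ H, Measurable H → H ≤ F → H ≤ᵐ[μ] G := fun H hH hHF =>
    ae_le_of_forall_setLIntegral_le_of_sigmaFinite hH fun s _ _ =>
      (lintegral_mono hHF).trans_eq (hG_eq s)
  refine ⟨G, hG, hGF, fun k hk hk_top => le_antisymm ?_ (by gcongr; exact hGF _)⟩
  obtain ⟨H, hH, hHF, hH_eq⟩ := exists_measurable_le_lintegral_eq μ fun x => k x * F x
  rw [hH_eq]
  refine lintegral_mono_ae ?_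
  filter_upwards [hk_top, hG_max (fun x => H x / k x) (hH.div hk) fun x =>
    ENNReal.div_le_of_le_mul' (hHF x)] with x hx hxG
  rcases eq_or_ne (k x) 0 with h0 | h0
  · simpa [h0] using hHF x
  · rwa [ENNReal.div_le_iff' h0 hx] at hxG

end Schur

lemma lintegral_comp_sub_mul (b : ℝ) {a : ℝ} (ha : a ≠ 0) (g : ℝ → ℝ≥0∞) :
    ENNReal.ofReal |a| * ∫⁻ z, g (b - z * a) = ∫⁻ r, g r := by
  calc ENNReal.ofReal |a| * ∫⁻ z, g (b - z * a)
      = ∫⁻ r, g (b - r) ∂(ENNReal.ofReal |a| • Measure.map (· * a) volume) := by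
        rw [lintegral_smul_measure, smul_eq_mul, (measurableEmbedding_mulRight₀ ha).lintegral_map]
    _ = ∫⁻ r, g (b - r) := by rw [Real.smul_map_volume_mul_right ha]
    _ = ∫⁻ r, g r :=
        (Measure.measurePreserving_sub_left volume b).lintegral_comp_emb
          (MeasurableEquiv.subLeft b).measurableEmbedding g

lemma intervalIntegrable_one_sub_sq_rpow {s : ℝ} (hs : -1 < s) :
    IntervalIntegrable (fun z : ℝ => (1 - z ^ 2) ^ s) volume (-1) 1 := by
  have hleft : IntervalIntegrable (fun z : ℝ => (1 - z ^ 2) ^ s) volume (-1) 0 := by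
    have hplus : IntervalIntegrable (fun z : ℝ => (1 + z) ^ s) volume (-1) 0 := by
      simpa using (intervalIntegral.intervalIntegrable_rpow' (a := 0) (b := 1) hs).comp_add_left 1
    have hminus : ContinuousOn (fun z : ℝ => (1 - z) ^ s) (uIcc (-1) 0) := by
      refine ContinuousOn.rpow_const (by fun_prop) fun z hz => Or.inl ?_
      rw [uIcc_of_le (by norm_num)] at hz
      linarith [hz.2]
    refine (hplus.mul_continuousOn hminus).congr fun z hz => ?_
    rw [uIoc_of_le (by norm_num)] at hz
    rw [show 1 - z ^ 2 = (1 + z) * (1 - z) by ring,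
      Real.mul_rpow (by linarith [hz.1]) (by linarith [hz.2])]
  have hright : IntervalIntegrable (fun z : ℝ => (1 - z ^ 2) ^ s) volume 0 1 := by
    simpa using ((IntervalIntegrable.iff_comp_neg).1 hleft).symm
  exact hleft.trans hright

/-! ### The geometry of `R` -/

lemma Rker_comm (x y z : ℝ) : Rker x y z = Rker y x z := by
  unfold Rker; ring

lemma one_sub_Rker_sq {x y : ℝ} (hx : x ^ 2 ≤ 1) (hy : y ^ 2 ≤ 1) (z : ℝ) :
    1 - Rker x y z ^ 2 =
      (1 - x ^ 2) * (1 - z ^ 2) + (x * √(1 - y ^ 2) + z * √(1 - x ^ 2) * y) ^ 2 := by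
  have hsx := Real.sq_sqrt (sub_nonneg.2 hx)
  have hsy := Real.sq_sqrt (sub_nonneg.2 hy)
  unfold Rker
  linear_combination (-z ^ 2 * (y ^ 2 + √(1 - y ^ 2) ^ 2)) * hsx -
    (x ^ 2 + z ^ 2 * (1 - x ^ 2)) * hsy

lemma mul_le_one_sub_Rker_sq {x y : ℝ} (hx : x ^ 2 ≤ 1) (hy : y ^ 2 ≤ 1) (z : ℝ) :
    (1 - x ^ 2) * (1 - z ^ 2) ≤ 1 - Rker x y z ^ 2 := by
  rw [one_sub_Rker_sq hx hy]
  exact le_add_of_nonneg_right (sq_nonneg _)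

lemma abs_Bker_le {x y z : ℝ} (hx : x ^ 2 ≤ 1) (hy : y ^ 2 ≤ 1) (hz : z ^ 2 ≤ 1) :
    |Bker y x z| ≤ 20 * (1 - Rker x y z ^ 2) := by
  set A := √(1 - x ^ 2) * y + z * x * √(1 - y ^ 2) with hA_def
  set q := √(1 - x ^ 2) * (1 - y) * (1 - z ^ 2) with hq_def
  have hA : A ^ 2 ≤ 1 - Rker x y z ^ 2 := by
    have hnonneg := mul_nonneg (sub_nonneg.2 hy) (sub_nonneg.2 hz)
    have hR := one_sub_Rker_sq hy hx z
    rw [Rker_comm] at hR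
    rw [hR, hA_def]
    linarith
  have hq : q ^ 2 ≤ 4 * (1 - Rker x y z ^ 2) := by
    have hy4 : (1 - y) ^ 2 ≤ 4 := by nlinarith
    have hz1 : 1 - z ^ 2 ≤ 1 := sub_le_self _ (sq_nonneg z)
    calc q ^ 2 = (1 - y) ^ 2 * (1 - z ^ 2) * ((1 - x ^ 2) * (1 - z ^ 2)) := by
          rw [hq_def, mul_pow, mul_pow, Real.sq_sqrt (sub_nonneg.2 hx)]; ring
      _ ≤ 4 * 1 * (1 - Rker x y z ^ 2) :=
          mul_le_mul (mul_le_mul hy4 hz1 (sub_nonneg.2 hz) (by norm_num))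
            (mul_le_one_sub_Rker_sq hx hy z)
            (mul_nonneg (sub_nonneg.2 hx) (sub_nonneg.2 hz)) (by norm_num)
      _ = 4 * (1 - Rker x y z ^ 2) := by ring
  have hB : Bker y x z = 2 * (A + q) ^ 2 - (1 - Rker x y z ^ 2) := rfl
  have hAq : (A + q) ^ 2 ≤ 2 * (A ^ 2 + q ^ 2) := add_sq_le
  rw [hB, abs_le]
  constructor <;> linarith [sq_nonneg (A + q), sq_nonneg A, sq_nonneg q]

/-! ### Legendre translation -/

/-- The weight `1 - x²`, extended by zero outside `[-1, 1]`. It takes values in `ℝ≥0∞`, so that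
its negative powers are `⊤` (not `0`) off `(-1, 1)`. -/
def boundaryWeight (x : ℝ) : ℝ≥0∞ := ENNReal.ofReal (1 - x ^ 2)

/-- The Chebyshev weight `(1 - z²)^(-1/2)` of `(-1, 1)`, extended by zero to the line. -/
def chebyshevWeight (z : ℝ) : ℝ≥0∞ := ENNReal.ofReal (√(1 - z ^ 2))⁻¹

/-- The kernel `(1 - x² - y² - r² + 2xyr)₊^(-1/2)` of Legendre translation, with respect to Lebesgue
measure: the image of the Chebyshev weight under `z ↦ R`. -/
def legendreKernel (y x r : ℝ) : ℝ≥0∞ :=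
  ENNReal.ofReal (√(1 - x ^ 2 - y ^ 2 - r ^ 2 + 2 * x * y * r))⁻¹

/-- Legendre translation by `y` of `G`, unnormalised (it sends `1` to `π`). -/
def legendreTranslation (y : ℝ) (G : ℝ → ℝ≥0∞) (x : ℝ) : ℝ≥0∞ :=
  ∫⁻ r in Ioo (-1) 1, legendreKernel y x r * G r

@[fun_prop]
lemma measurable_boundaryWeight : Measurable boundaryWeight := by
  unfold boundaryWeight; fun_prop

@[fun_prop]
lemma measurable_legendreKernel (y : ℝ) :
    Measurable (Function.uncurry (legendreKernel y)) := by
  unfold legendreKernel Function.uncurry; fun_prop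

lemma legendreKernel_comm (y x r : ℝ) : legendreKernel y x r = legendreKernel y r x := by
  unfold legendreKernel; ring_nf

lemma mem_Ioo_neg_one_one_iff {x : ℝ} : x ∈ Ioo (-1) 1 ↔ x ^ 2 < 1 := by
  rw [mem_Ioo, ← abs_lt, sq_lt_one_iff_abs_lt_one]

lemma boundaryWeight_ne_zero {x : ℝ} (hx : x ^ 2 < 1) : boundaryWeight x ≠ 0 :=
  (ENNReal.ofReal_pos.2 (sub_pos.2 hx)).ne'

lemma boundaryWeight_ne_top (x : ℝ) : boundaryWeight x ≠ ⊤ := ENNReal.ofReal_ne_top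

lemma boundaryWeight_rpow_sub_one {x : ℝ} (hx : x ^ 2 < 1) (α : ℝ) :
    boundaryWeight x ^ (α - 1) = boundaryWeight x ^ α * (boundaryWeight x)⁻¹ := by
  rw [ENNReal.rpow_sub _ _ (boundaryWeight_ne_zero hx) (boundaryWeight_ne_top x),
    ENNReal.rpow_one, div_eq_mul_inv]

lemma boundaryWeight_mul_le {x y : ℝ} (hx : x ^ 2 ≤ 1) (hy : y ^ 2 ≤ 1) (z : ℝ) :
    boundaryWeight x * boundaryWeight z ≤ boundaryWeight (Rker x y z) := by
  unfold boundaryWeight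
  rw [← ENNReal.ofReal_mul (sub_nonneg.2 hx)]
  exact ENNReal.ofReal_le_ofReal (mul_le_one_sub_Rker_sq hx hy z)

lemma chebyshevWeight_eq_zero {z : ℝ} (hz : 1 ≤ z ^ 2) : chebyshevWeight z = 0 := by
  simp [chebyshevWeight, Real.sqrt_eq_zero_of_nonpos (sub_nonpos.2 hz)]

lemma legendreKernel_eq_zero {y r : ℝ} (hy : y ^ 2 ≤ 1) (hr : 1 ≤ r ^ 2) (x : ℝ) :
    legendreKernel y x r = 0 := by
  have hneg : 1 - x ^ 2 - y ^ 2 - r ^ 2 + 2 * x * y * r ≤ 0 := by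
    nlinarith [mul_nonneg (sub_nonneg.2 hy) (sub_nonneg.2 hr), sq_nonneg (x - y * r)]
  simp [legendreKernel, Real.sqrt_eq_zero_of_nonpos hneg]

lemma chebyshevWeight_eq_mul_legendreKernel {x y : ℝ} (hx : x ^ 2 < 1) (hy : y ^ 2 < 1) (z : ℝ) :
    chebyshevWeight z =
      ENNReal.ofReal (√(1 - x ^ 2) * √(1 - y ^ 2)) * legendreKernel y x (Rker x y z) := by
  have hx_pos := sub_pos.2 hx
  have hy_pos := sub_pos.2 hy
  have hdisc : 1 - x ^ 2 - y ^ 2 - Rker x y z ^ 2 + 2 * x * y * Rker x y z =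
      (√(1 - x ^ 2) * √(1 - y ^ 2)) ^ 2 * (1 - z ^ 2) := by
    unfold Rker
    linear_combination (-(1 - y ^ 2)) * Real.sq_sqrt hx_pos.le -
      √(1 - x ^ 2) ^ 2 * Real.sq_sqrt hy_pos.le
  unfold chebyshevWeight legendreKernel
  rw [hdisc, Real.sqrt_mul (sq_nonneg _), Real.sqrt_sq (by positivity),
    ← ENNReal.ofReal_mul (by positivity), mul_inv, mul_inv_cancel_left₀ (by positivity)]

lemma legendreTranslation_eq_lintegral {x y : ℝ} (hx : x ^ 2 < 1) (hy : y ^ 2 < 1)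
    (G : ℝ → ℝ≥0∞) :
    legendreTranslation y G x = ∫⁻ z, G (Rker x y z) * chebyshevWeight z := by
  have hd : 0 < √(1 - x ^ 2) * √(1 - y ^ 2) :=
    mul_pos (Real.sqrt_pos.2 (sub_pos.2 hx)) (Real.sqrt_pos.2 (sub_pos.2 hy))
  have hsupport : (Ioo (-1) 1).indicator (fun r => legendreKernel y x r * G r) =
      fun r => legendreKernel y x r * G r := by
    refine indicator_eq_self.2 fun r hr => ?_
    rw [mem_Ioo_neg_one_one_iff]
    by_contra! hr_sq
    simp [legendreKernel_eq_zero hy.le hr_sq] at hr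
  rw [legendreTranslation, ← lintegral_indicator measurableSet_Ioo, hsupport,
    ← lintegral_comp_sub_mul (x * y) hd.ne', abs_of_pos hd,
    ← lintegral_const_mul' _ _ ENNReal.ofReal_ne_top]
  refine lintegral_congr fun z => ?_
  rw [chebyshevWeight_eq_mul_legendreKernel hx hy z, Rker, mul_assoc z]
  ring

/-- The integral of `(1 - z²)^(-γ)` against the Chebyshev weight: the constant with which Legendre
translation preserves `(1 - x²)^(-γ)`. -/
def chebyshevMoment (γ : ℝ) : ℝ≥0∞ := ∫⁻ z, boundaryWeight z ^ (-γ) * chebyshevWeight z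

lemma chebyshevMoment_ne_top {γ : ℝ} (hγ : γ < 1 / 2) : chebyshevMoment γ ≠ ⊤ := by
  have hint := (intervalIntegrable_iff_integrableOn_Ioo_of_le (by norm_num)).1
    (intervalIntegrable_one_sub_sq_rpow (s := -γ - 1 / 2) (by linarith))
  refine ne_top_of_le_ne_top hint.hasFiniteIntegral.ne ?_
  rw [← lintegral_indicator measurableSet_Ioo, chebyshevMoment]
  refine lintegral_mono fun z => ?_
  by_cases hz : z ^ 2 < 1
  · have hz_pos := sub_pos.2 hz
    beta_reduce
    rw [indicator_of_mem (mem_Ioo_neg_one_one_iff.2 hz), Real.enorm_of_nonneg (by positivity),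
      boundaryWeight, chebyshevWeight, ENNReal.ofReal_rpow_of_pos hz_pos,
      ← ENNReal.ofReal_mul (by positivity), Real.rpow_sub hz_pos, ← Real.sqrt_eq_rpow,
      div_eq_mul_inv]
  · simp [chebyshevWeight_eq_zero (not_lt.1 hz)]

lemma legendreTranslation_rpow_le {x y γ : ℝ} (hx : x ^ 2 < 1) (hy : y ^ 2 < 1) (hγ : 0 ≤ γ) :
    legendreTranslation y (fun r => boundaryWeight r ^ (-γ)) x ≤
      chebyshevMoment γ * boundaryWeight x ^ (-γ) := by
  have hxγ : boundaryWeight x ^ (-γ) ≠ ⊤ :=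
    ENNReal.rpow_ne_top_of_ne_zero (boundaryWeight_ne_zero hx) (boundaryWeight_ne_top x)
  rw [legendreTranslation_eq_lintegral hx hy, chebyshevMoment, ← lintegral_mul_const' _ _ hxγ]
  refine lintegral_mono fun z => ?_
  calc boundaryWeight (Rker x y z) ^ (-γ) * chebyshevWeight z
      ≤ (boundaryWeight x * boundaryWeight z) ^ (-γ) * chebyshevWeight z := by
        gcongr ?_ * _
        rw [ENNReal.rpow_neg, ENNReal.rpow_neg, ENNReal.inv_le_inv]
        exact ENNReal.rpow_le_rpow (boundaryWeight_mul_le hx.le hy.le z) hγ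
    _ = boundaryWeight z ^ (-γ) * chebyshevWeight z * boundaryWeight x ^ (-γ) := by
        rw [ENNReal.mul_rpow_of_ne_top (boundaryWeight_ne_top x) (boundaryWeight_ne_top z)]
        ring

lemma ae_restrict_Ioo_neg_one_one_sq_lt_one :
    ∀ᵐ x : ℝ ∂volume.restrict (Ioo (-1) 1), x ^ 2 < 1 :=
  (ae_restrict_mem measurableSet_Ioo).mono fun _ => mem_Ioo_neg_one_one_iff.1

lemma lintegral_legendreTranslation_rpow_le_of_measurable {q γ δ : ℝ} (hq : 1 ≤ q) (hγ : 0 ≤ γ)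
    (hδ : 0 ≤ δ) {y : ℝ} (hy : y ^ 2 < 1) {G : ℝ → ℝ≥0∞} (hG : Measurable G) :
    ∫⁻ x in Ioo (-1) 1, boundaryWeight x ^ (γ * (q - 1) - δ) * legendreTranslation y G x ^ q ≤
      chebyshevMoment γ ^ (q - 1) * chebyshevMoment δ *
        ∫⁻ x in Ioo (-1) 1, boundaryWeight x ^ (γ * (q - 1) - δ) * G x ^ q := by
  have hweight : ∀ F : ℝ → ℝ≥0∞,
      ∫⁻ x in Ioo (-1) 1, boundaryWeight x ^ (γ * (q - 1) - δ) * F x ^ q =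
        ∫⁻ x in Ioo (-1) 1,
          (boundaryWeight x ^ (-γ)) ^ (1 - q) * boundaryWeight x ^ (-δ) * F x ^ q := fun F => by
    refine lintegral_congr_ae ?_
    filter_upwards [ae_restrict_Ioo_neg_one_one_sq_lt_one] with x hx
    rw [← ENNReal.rpow_mul, ← ENNReal.rpow_add _ _ (boundaryWeight_ne_zero hx)
      (boundaryWeight_ne_top x)]
    ring_nf
  rw [hweight, hweight]
  refine lintegral_rpow_lintegral_mul_le_of_schur hq (measurable_legendreKernel y) (by fun_prop)
    (by fun_prop) (by fun_prop) hG ?_ ?_ ?_ <;>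
    filter_upwards [ae_restrict_Ioo_neg_one_one_sq_lt_one] with x hx
  · have h0 := boundaryWeight_ne_zero hx
    have htop := boundaryWeight_ne_top x
    exact ⟨by simp [ENNReal.rpow_eq_zero_iff, h0, htop],
      ENNReal.rpow_ne_top_of_ne_zero h0 htop⟩
  · exact legendreTranslation_rpow_le hx hy hγ
  · simp only [legendreKernel_comm y _ x]
    exact legendreTranslation_rpow_le hx hy hδ

theorem lintegral_legendreTranslation_rpow_le {q γ δ : ℝ} (hq : 1 ≤ q) (hγ : 0 ≤ γ) (hδ : 0 ≤ δ)
    {y : ℝ} (hy : y ^ 2 < 1) (G : ℝ → ℝ≥0∞) :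
    ∫⁻ x in Ioo (-1) 1, boundaryWeight x ^ (γ * (q - 1) - δ) * legendreTranslation y G x ^ q ≤
      chebyshevMoment γ ^ (q - 1) * chebyshevMoment δ *
        ∫⁻ x in Ioo (-1) 1, boundaryWeight x ^ (γ * (q - 1) - δ) * G x ^ q := by
  obtain ⟨G', hG', hG'_le, hG'_eq⟩ :=
    exists_measurable_le_forall_lintegral_mul_eq (μ := volume.restrict (Ioo (-1) 1)) G
  have htranslation : legendreTranslation y G = legendreTranslation y G' := funext fun x =>
    hG'_eq _ (by fun_prop) (ae_of_all _ fun _ => ENNReal.ofReal_ne_top)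
  rw [htranslation]
  refine (lintegral_legendreTranslation_rpow_le_of_measurable hq hγ hδ hy hG').trans ?_
  gcongr with x
  exact hG'_le x

theorem eLpNorm_legendreTranslation_le {p : ℝ≥0∞} (hp : 1 ≤ p) (hp_top : p ≠ ⊤) {β γ δ : ℝ}
    (hγ : 0 ≤ γ) (hδ : 0 ≤ δ) (hβ : β * p.toReal = γ * (p.toReal - 1) - δ)
    {y : ℝ} (hy : y ^ 2 < 1) (G : ℝ → ℝ≥0∞) :
    eLpNorm (fun x => boundaryWeight x ^ β * legendreTranslation y G x) p
        (volume.restrict (Ioo (-1) 1)) ≤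
      (chebyshevMoment γ ^ (p.toReal - 1) * chebyshevMoment δ) ^ (1 / p.toReal) *
        eLpNorm (fun x => boundaryWeight x ^ β * G x) p (volume.restrict (Ioo (-1) 1)) := by
  have hq : 1 ≤ p.toReal := by simpa using ENNReal.toReal_mono hp_top hp
  have hq0 : 0 ≤ 1 / p.toReal := by positivity
  have hpow : ∀ F : ℝ → ℝ≥0∞, ∀ x, (boundaryWeight x ^ β * F x) ^ p.toReal =
      boundaryWeight x ^ (γ * (p.toReal - 1) - δ) * F x ^ p.toReal := fun F x => by
    rw [ENNReal.mul_rpow_of_nonneg _ _ (by linarith), ← ENNReal.rpow_mul, hβ]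
  simp only [eLpNorm_eq_lintegral_rpow_enorm_toReal (one_pos.trans_le hp).ne' hp_top,
    enorm_eq_self, hpow]
  rw [← ENNReal.mul_rpow_of_nonneg _ _ hq0]
  exact ENNReal.rpow_le_rpow (lintegral_legendreTranslation_rpow_le hq hγ hδ hy G) hq0

theorem eLpNorm_top_legendreTranslation_le {β : ℝ} (hβ : 0 ≤ β) {y : ℝ} (hy : y ^ 2 < 1)
    (G : ℝ → ℝ≥0∞) :
    eLpNorm (fun x => boundaryWeight x ^ β * legendreTranslation y G x) ⊤
        (volume.restrict (Ioo (-1) 1)) ≤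
      chebyshevMoment β *
        eLpNorm (fun x => boundaryWeight x ^ β * G x) ⊤ (volume.restrict (Ioo (-1) 1)) := by
  set M := eLpNorm (fun x => boundaryWeight x ^ β * G x) ⊤ (volume.restrict (Ioo (-1) 1))
    with hM
  have hcancel : ∀ {x : ℝ}, x ^ 2 < 1 → boundaryWeight x ^ β * boundaryWeight x ^ (-β) = 1 :=
    fun {x} hx => by
      rw [← ENNReal.rpow_add _ _ (boundaryWeight_ne_zero hx) (boundaryWeight_ne_top x),
        add_neg_cancel, ENNReal.rpow_zero]
  have hG : ∀ᵐ r ∂volume.restrict (Ioo (-1) 1), G r ≤ M * boundaryWeight r ^ (-β) := by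
    filter_upwards [ae_le_eLpNormEssSup (f := fun x => boundaryWeight x ^ β * G x),
      ae_restrict_Ioo_neg_one_one_sq_lt_one] with r hr hr_sq
    rw [← eLpNorm_exponent_top, ← hM, enorm_eq_self] at hr
    calc G r = boundaryWeight r ^ β * G r * boundaryWeight r ^ (-β) := by
          rw [mul_right_comm, hcancel hr_sq, one_mul]
      _ ≤ M * boundaryWeight r ^ (-β) := by gcongr
  rw [eLpNorm_exponent_top]
  refine essSup_le_of_ae_le _ ?_
  filter_upwards [ae_restrict_Ioo_neg_one_one_sq_lt_one] with x hx
  calc boundaryWeight x ^ β * legendreTranslation y G x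
      ≤ boundaryWeight x ^ β *
          (M * legendreTranslation y (fun r => boundaryWeight r ^ (-β)) x) := by
        gcongr _ * ?_
        unfold legendreTranslation
        rw [← lintegral_const_mul _ (by fun_prop)]
        refine lintegral_mono_ae ?_
        filter_upwards [hG] with r hr
        rw [mul_left_comm]
        gcongr
    _ ≤ boundaryWeight x ^ β * (M * (chebyshevMoment β * boundaryWeight x ^ (-β))) := by
        gcongr
        exact legendreTranslation_rpow_le hx hy hβ
    _ = boundaryWeight x ^ β * boundaryWeight x ^ (-β) * (chebyshevMoment β * M) := by ring
    _ = chebyshevMoment β * M := by rw [hcancel hx, one_mul]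

lemma ParamOK.exists_exponents {p : ℝ≥0∞} {α : ℝ} (h : ParamOK p α) (hp_top : p ≠ ⊤) :
    ∃ γ δ : ℝ, (0 ≤ γ ∧ γ < 1 / 2) ∧ (0 ≤ δ ∧ δ < 1 / 2) ∧
      (α - 1) * p.toReal = γ * (p.toReal - 1) - δ := by
  obtain ⟨hp, hone, hmid, -⟩ := h
  rcases hp.eq_or_lt with rfl | hp1
  · obtain ⟨hα, hα'⟩ := hone rfl
    exact ⟨0, 1 - α, by norm_num, ⟨by linarith, by linarith⟩, by simp⟩
  obtain ⟨hα, hα'⟩ := hmid hp1 hp_top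
  have hq : 1 < p.toReal := by
    simpa using (ENNReal.toReal_lt_toReal ENNReal.one_ne_top hp_top).2 hp1
  generalize p.toReal = q at *
  have hinv : 1 / (2 * q) * q = 1 / 2 := by field_simp
  have hlower := mul_lt_mul_of_pos_right hα (one_pos.trans hq)
  have hupper := mul_lt_mul_of_pos_right hα' (one_pos.trans hq)
  rw [sub_mul, hinv] at hlower hupper
  rcases le_total α 1 with hα1 | hα1
  · exact ⟨0, (1 - α) * q, by norm_num, ⟨by nlinarith, by linarith⟩, by ring⟩
  · refine ⟨(α - 1) * q / (q - 1), 0, ⟨?_, ?_⟩, by norm_num, ?_⟩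
    · have := sub_nonneg.2 hα1
      have := sub_pos.2 hq
      positivity
    · rw [div_lt_iff₀ (sub_pos.2 hq)]
      linarith
    · rw [div_mul_cancel₀ _ (sub_pos.2 hq).ne', sub_zero]

theorem ParamOK.exists_eLpNorm_legendreTranslation_le {p : ℝ≥0∞} {α : ℝ} (h : ParamOK p α) :
    ∃ C : ℝ≥0∞, C ≠ ⊤ ∧ ∀ y : ℝ, y ^ 2 < 1 → ∀ G : ℝ → ℝ≥0∞,
      eLpNorm (fun x => boundaryWeight x ^ (α - 1) * legendreTranslation y G x) p
          (volume.restrict (Ioo (-1) 1)) ≤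
        C * eLpNorm (fun x => boundaryWeight x ^ (α - 1) * G x) p
          (volume.restrict (Ioo (-1) 1)) := by
  rcases eq_or_ne p ⊤ with rfl | hp_top
  · obtain ⟨hα, hα'⟩ := h.2.2.2 rfl
    exact ⟨chebyshevMoment (α - 1), chebyshevMoment_ne_top (by linarith), fun y hy =>
      eLpNorm_top_legendreTranslation_le (by linarith) hy⟩
  · obtain ⟨γ, δ, ⟨hγ, hγ'⟩, ⟨hδ, hδ'⟩, hα⟩ := h.exists_exponents hp_top
    have hq : 1 ≤ p.toReal := by simpa using ENNReal.toReal_mono hp_top h.1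
    refine ⟨_, ?_, fun y hy => eLpNorm_legendreTranslation_le h.1 hp_top hγ hδ hα hy⟩
    exact ENNReal.rpow_ne_top_of_nonneg (by positivity) <| ENNReal.mul_ne_top
      (ENNReal.rpow_ne_top_of_nonneg (sub_nonneg.2 hq) (chebyshevMoment_ne_top hγ'))
      (chebyshevMoment_ne_top hδ')

/-! ### The generalised translation operator -/

theorem enorm_Tgen_le {x y : ℝ} (hx : x ^ 2 < 1) (hy : y ^ 2 < 1) (f : ℝ → ℝ) :
    ‖Tgen y f x‖ₑ ≤ ENNReal.ofReal (80 / (π * (1 + y) ^ 2)) *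
      ((boundaryWeight x)⁻¹ * legendreTranslation y (fun r => boundaryWeight r * ‖f r‖ₑ) x) := by
  have hx_pos := sub_pos.2 hx
  have hfactor : ‖4 / (π * (1 - x ^ 2) * (1 + y) ^ 2)‖ₑ =
      ENNReal.ofReal (4 / (π * (1 + y) ^ 2)) * (boundaryWeight x)⁻¹ := by
    rw [boundaryWeight, ← ENNReal.ofReal_inv_of_pos hx_pos, ← ENNReal.ofReal_mul (by positivity),
      Real.enorm_of_nonneg (by positivity)]
    congr 1
    field_simp
  have hintegrand : ∀ z ∈ Ioc (-1 : ℝ) 1,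
      ‖Bker y x z * f (Rker x y z) / √(1 - z ^ 2)‖ₑ ≤ ENNReal.ofReal 20 *
        (boundaryWeight (Rker x y z) * ‖f (Rker x y z)‖ₑ * chebyshevWeight z) := fun z hz => by
    have hB : ‖Bker y x z‖ₑ ≤ ENNReal.ofReal 20 * boundaryWeight (Rker x y z) := by
      rw [boundaryWeight, ← ENNReal.ofReal_mul (by norm_num), Real.enorm_eq_ofReal_abs]
      exact ENNReal.ofReal_le_ofReal (abs_Bker_le hx.le hy.le (by nlinarith [hz.1, hz.2]))
    rw [div_eq_mul_inv, enorm_mul, enorm_mul, Real.enorm_of_nonneg (inv_nonneg.2 (sqrt_nonneg _)),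
      ← mul_assoc, ← mul_assoc]
    exact mul_le_mul_left (mul_le_mul_left hB _) _
  have hintegral : ‖∫ z in (-1 : ℝ)..1, Bker y x z * f (Rker x y z) / √(1 - z ^ 2)‖ₑ ≤
      ENNReal.ofReal 20 * legendreTranslation y (fun r => boundaryWeight r * ‖f r‖ₑ) x := by
    rw [intervalIntegral.integral_of_le (by norm_num), legendreTranslation_eq_lintegral hx hy,
      ← lintegral_const_mul' _ _ ENNReal.ofReal_ne_top]
    exact (enorm_integral_le_lintegral_enorm _).trans <|
      (setLIntegral_mono' measurableSet_Ioc hintegrand).trans (setLIntegral_le_lintegral _ _)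
  rw [Tgen, enorm_mul, hfactor]
  refine (mul_le_mul_right hintegral _).trans_eq ?_
  rw [show 80 / (π * (1 + y) ^ 2) = 4 / (π * (1 + y) ^ 2) * 20 by ring,
    ENNReal.ofReal_mul (by positivity)]
  ring

lemma integral_inv_sqrt_one_sub_sq : ∫ z in (-1 : ℝ)..1, (√(1 - z ^ 2))⁻¹ = π := by
  have h := Polynomial.Chebyshev.integral_measureT fun _ => 1
  rw [Polynomial.Chebyshev.integral_measureT_eq_integral_cos] at h
  simpa using h.symm

lemma Tgen_one (f : ℝ → ℝ) {x : ℝ} (hx : x ^ 2 < 1) : Tgen 1 f x = f x := by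
  have hx_ne := (sub_pos.2 hx).ne'
  have hR : ∀ z, Rker x 1 z = x := fun z => by simp [Rker]
  have hB : ∀ z, Bker 1 x z = 1 - x ^ 2 := fun z => by
    simp [Bker, hR, Real.sq_sqrt (sub_pos.2 hx).le]; ring
  simp only [Tgen, hR, hB, div_eq_mul_inv _ (√_), intervalIntegral.integral_const_mul,
    integral_inv_sqrt_one_sub_sq]
  field_simp
  norm_num

lemma wnorm_eq_eLpNorm_boundaryWeight (p : ℝ≥0∞) (α : ℝ) (f : ℝ → ℝ) :
    wnorm p α f =
      eLpNorm (fun x => boundaryWeight x ^ α * ‖f x‖ₑ) p (volume.restrict (Ioo (-1) 1)) := by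
  rw [wnorm, ← Measure.restrict_congr_set Ioo_ae_eq_Icc]
  refine eLpNorm_congr_enorm_ae ?_
  filter_upwards [ae_restrict_Ioo_neg_one_one_sq_lt_one] with x hx
  have hx_pos := sub_pos.2 hx
  rw [enorm_eq_self, enorm_mul, Real.enorm_of_nonneg (rpow_nonneg hx_pos.le α), boundaryWeight,
    ENNReal.ofReal_rpow_of_pos hx_pos, mul_comm]

lemma wnorm_Tgen_le (p : ℝ≥0∞) (α : ℝ) {y : ℝ} (hy : y ^ 2 < 1) (f : ℝ → ℝ) :
    wnorm p α (Tgen y f) ≤ ENNReal.ofReal (80 / (π * (1 + y) ^ 2)) *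
      eLpNorm (fun x => boundaryWeight x ^ (α - 1) *
        legendreTranslation y (fun r => boundaryWeight r * ‖f r‖ₑ) x) p
          (volume.restrict (Ioo (-1) 1)) := by
  rw [wnorm_eq_eLpNorm_boundaryWeight]
  refine eLpNorm_le_mul_eLpNorm_of_ae_le_mul' ?_ p
  filter_upwards [ae_restrict_Ioo_neg_one_one_sq_lt_one] with x hx
  rw [enorm_eq_self, enorm_eq_self, boundaryWeight_rpow_sub_one hx, ← ENNReal.ofReal]
  exact (mul_le_mul_right (enorm_Tgen_le hx hy f) _).trans_eq (by ring)

lemma wnorm_eq_eLpNorm_boundaryWeight_rpow_sub_one (p : ℝ≥0∞) (α : ℝ) (f : ℝ → ℝ) :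
    wnorm p α f =
      eLpNorm (fun x => boundaryWeight x ^ (α - 1) * (boundaryWeight x * ‖f x‖ₑ)) p
        (volume.restrict (Ioo (-1) 1)) := by
  rw [wnorm_eq_eLpNorm_boundaryWeight]
  refine eLpNorm_congr_ae ?_
  filter_upwards [ae_restrict_Ioo_neg_one_one_sq_lt_one] with x hx
  rw [← mul_assoc, boundaryWeight_rpow_sub_one hx, mul_assoc (_ ^ α),
    ENNReal.inv_mul_cancel (boundaryWeight_ne_zero hx) (boundaryWeight_ne_top x), mul_one]

lemma wnorm_Tgen_one (p : ℝ≥0∞) (α : ℝ) (f : ℝ → ℝ) :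
    wnorm p α (Tgen 1 f) = wnorm p α f := by
  simp only [wnorm_eq_eLpNorm_boundaryWeight]
  refine eLpNorm_congr_ae ?_
  filter_upwards [ae_restrict_Ioo_neg_one_one_sq_lt_one] with x hx
  rw [Tgen_one f hx]

theorem ParamOK.exists_wnorm_Tgen_le {p : ℝ≥0∞} {α : ℝ} (h : ParamOK p α) :
    ∃ C > (0 : ℝ), ∀ y, -1 < y → y ≤ 1 → ∀ f : ℝ → ℝ,
      wnorm p α (Tgen y f) ≤ ENNReal.ofReal (C / (1 + y) ^ 2) * wnorm p α f := by
  obtain ⟨C, hC, hC_le⟩ := h.exists_eLpNorm_legendreTranslation_le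
  have hC_nonneg : 0 ≤ 80 / π * C.toReal := by positivity
  refine ⟨80 / π * C.toReal + 4, by positivity, fun y hy hy1 f => ?_⟩
  rcases hy1.eq_or_lt with rfl | hy1
  · rw [wnorm_Tgen_one]
    refine le_mul_of_one_le_left' (ENNReal.one_le_ofReal.2 ?_)
    rw [one_le_div₀ (by norm_num)]
    linarith
  have hy_sq : y ^ 2 < 1 := mem_Ioo_neg_one_one_iff.1 ⟨hy, hy1⟩
  calc wnorm p α (Tgen y f)
      ≤ ENNReal.ofReal (80 / (π * (1 + y) ^ 2)) * (C * wnorm p α f) := by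
        refine (wnorm_Tgen_le p α hy_sq f).trans ?_
        rw [wnorm_eq_eLpNorm_boundaryWeight_rpow_sub_one]
        gcongr
        exact hC_le y hy_sq _
    _ = ENNReal.ofReal (80 / π * C.toReal / (1 + y) ^ 2) * wnorm p α f := by
        rw [← ENNReal.ofReal_toReal hC, ← mul_assoc, ← ENNReal.ofReal_mul (by positivity),
          ENNReal.toReal_ofReal ENNReal.toReal_nonneg, ← div_div]
        ring_nf
    _ ≤ ENNReal.ofReal ((80 / π * C.toReal + 4) / (1 + y) ^ 2) * wnorm p α f := by
        gcongr
        linarith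

theorem Tgen_bound (p : ℝ≥0∞) (α : ℝ) (hpα : ParamOK p α) :
    ∃ C > (0 : ℝ), ∀ f : ℝ → ℝ, wnorm p α f < ⊤ →
      ∀ t ∈ Set.Ioo (-Real.pi) Real.pi,
        wnorm p α (fun x => Tgen (Real.cos t) f x) ≤
          ENNReal.ofReal (C / Real.cos (t / 2) ^ 4) * wnorm p α f := by
  obtain ⟨C, hC, hbound⟩ := hpα.exists_wnorm_Tgen_le
  refine ⟨C / 4, by positivity, fun f _ t ht => ?_⟩
  have hcos : 0 < cos (t / 2) := cos_pos_of_mem_Ioo ⟨by linarith [ht.1], by linarith [ht.2]⟩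
  have hdouble : cos t = 2 * cos (t / 2) ^ 2 - 1 := by rw [← cos_two_mul, mul_div_cancel₀]; simp
  have hconst : C / 4 / cos (t / 2) ^ 4 = C / (1 + cos t) ^ 2 := by
    rw [hdouble]; field_simp; ring
  rw [hconst]
  exact hbound (cos t) (by nlinarith [sq_pos_of_pos hcos]) (cos_le_one t) f
end
end

section
/- Let 1 ≤ p ≤ ∞, α > −1/p (α ≥ 0 for p = ∞), and ρ ≥ 0. There exist constants C₁, C₂ independent of n such that for every algebraic polynomial P_n of degree at most n−1: ‖P_n'(x)(1−x²)^{α+1/2}‖_p ≤ C₁ n ‖P_n(x)(1−x²)^α‖_p and ‖P_n(x)(1−x²)^α‖_p ≤ C₂ n^{2ρ} ‖P_n(x)(1−x²)^{α+ρ}‖_p. -/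
open MeasureTheory Real Set
open scoped ENNReal

noncomputable section

/-!
After the substitution `x = cos θ` a polynomial of degree at most `n` becomes an even trigonometric
polynomial `T` of degree at most `n`, and both weighted norms become `L^p` norms over a period of
`T` or `T'` against powers of `|sin θ|`.

The values of `T'` are finite combinations of translates of `T` (M. Riesz's interpolation formula).
Multiplying `T` by a power of a Fejér kernel centred at the evaluation point makes the coefficients
decay so fast that they absorb the oscillation of any weight growing at most polynomially at scale
`1 / n`; by translation invariance the triangle inequality then bounds the weighted norm of `T'`.

The weight `(|sin θ| + 1 / n) ^ β` is of this kind, and on trigonometric polynomials it yields a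
norm equivalent to that of `|sin θ| ^ β`: for `β ≥ 0` a short shift of a point leaves the
neighbourhood of the zeros of the sine and costs little, by Bernstein's inequality; for `β < 0` a
Nikolskii inequality bounds `T` uniformly and `|sin θ| ^ β` has a small `L^p` norm over that
neighbourhood. As `1 ≤ n * (|sin θ| + 1 / n)`, raising the exponent by `r` costs a factor `n ^ r`.
-/

/-! ### Exponentials and trigonometric polynomials -/

/-- The character `θ ↦ e^{ijθ}` of the circle, as a function on the line. -/
def expI (j : ℤ) (θ : ℝ) : ℂ := Complex.exp (j * θ * Complex.I)

lemma expI_zero (θ : ℝ) : expI 0 θ = 1 := by simp [expI]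

lemma expI_zero_right (j : ℤ) : expI j 0 = 1 := by simp [expI]

lemma expI_add (j l : ℤ) (θ : ℝ) : expI (j + l) θ = expI j θ * expI l θ := by
  rw [expI, expI, expI, ← Complex.exp_add]
  push_cast
  ring_nf

lemma expI_add_right (j : ℤ) (θ φ : ℝ) : expI j (θ + φ) = expI j θ * expI j φ := by
  rw [expI, expI, expI, ← Complex.exp_add]
  push_cast
  ring_nf

lemma norm_expI (j : ℤ) (θ : ℝ) : ‖expI j θ‖ = 1 := by
  simpa [expI] using Complex.norm_exp_ofReal_mul_I (j * θ)

lemma conj_expI (j : ℤ) (θ : ℝ) : (starRingEnd ℂ) (expI j θ) = expI (-j) θ := by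
  simp [expI, ← Complex.exp_conj]

lemma expI_neg_right (j : ℤ) (θ : ℝ) : expI j (-θ) = expI (-j) θ := by
  simp [expI]

lemma expI_periodic (j : ℤ) : Function.Periodic (expI j) (2 * π) := by
  intro θ
  have hone : expI j (2 * π) = 1 := Complex.exp_eq_one_iff.2 ⟨j, by push_cast; ring⟩
  rw [expI_add_right, hone, mul_one]

lemma hasDerivAt_expI (j : ℤ) (θ : ℝ) :
    HasDerivAt (expI j) (j * Complex.I * expI j θ) θ := by
  have h := (((hasDerivAt_id (θ : ℂ)).const_mul (j : ℂ)).mul_const Complex.I).cexp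
  refine h.comp_ofReal.congr_deriv ?_
  simp only [expI, id_eq, mul_one]
  ring

lemma continuous_expI (j : ℤ) : Continuous (expI j) := by
  unfold expI
  fun_prop

lemma sin_natCast_mul_eq_expI (N : ℕ) (t : ℝ) :
    (sin (N * t) : ℂ) = (expI (-N) t - expI N t) * Complex.I / 2 := by
  simp [expI, Complex.sin]

/-- The `k`-th of `M` equally spaced nodes on the circle. -/
def node (M k : ℕ) : ℝ := 2 * π * k / M

lemma sum_expI_node {M : ℕ} {d : ℤ} (hd : |d| < M) :
    ∑ k ∈ Finset.range M, expI d (node M k) = if d = 0 then (M : ℂ) else 0 := by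
  have hM : M ≠ 0 := by rintro rfl; exact (abs_nonneg d).not_gt (by simpa using hd)
  set ζ : ℂ := Complex.exp (2 * π * Complex.I / M) with hζ_def
  have hζ : IsPrimitiveRoot ζ M := Complex.isPrimitiveRoot_exp M hM
  have hpow (k : ℕ) : expI d (node M k) = (ζ ^ d) ^ k := by
    rw [hζ_def, ← Complex.exp_int_mul, ← Complex.exp_nat_mul, expI, node]
    push_cast
    ring_nf
  simp only [hpow]
  split_ifs with h0
  · simp [h0]
  · have hne : ζ ^ d ≠ 1 := fun h =>
      h0 (Int.eq_zero_of_abs_lt_dvd ((hζ.zpow_eq_one_iff_dvd d).1 h) hd)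
    rw [geom_sum_eq hne, ← zpow_natCast, zpow_comm, zpow_natCast, hζ.pow_eq_one, one_zpow,
      sub_self, zero_div]

lemma sum_expI_sub_node_mul_expI_add_node {M : ℕ} {j l : ℤ} (h : |j - l| < M) (u θ : ℝ) :
    ∑ k ∈ Finset.range M, expI l (u - node M k) * expI j (θ + node M k) =
      if l = j then (M : ℂ) * expI j (θ + u) else 0 := by
  have hterm (k : ℕ) : expI l (u - node M k) * expI j (θ + node M k) =
      expI l u * expI j θ * expI (j - l) (node M k) := by
    rw [sub_eq_add_neg u, sub_eq_add_neg j, expI_add_right, expI_add_right, expI_neg_right,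
      expI_add]
    ring
  simp only [hterm, ← Finset.mul_sum, sum_expI_node h, sub_eq_zero]
  rcases eq_or_ne l j with rfl | hne
  · rw [if_pos rfl, if_pos rfl, expI_add_right]
    ring
  · rw [if_neg hne, if_neg hne.symm, mul_zero]

/-- The space of trigonometric polynomials of degree at most `N`. -/
def trigPoly (N : ℕ) : Submodule ℂ (ℝ → ℂ) :=
  Submodule.span ℂ (expI '' {j : ℤ | |j| ≤ N})

lemma expI_mem_trigPoly {N : ℕ} {j : ℤ} (hj : |j| ≤ N) : expI j ∈ trigPoly N :=
  Submodule.subset_span ⟨j, hj, rfl⟩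

lemma const_mem_trigPoly (c : ℂ) : (fun _ => c) ∈ trigPoly 0 := by
  have h : (fun _ => c : ℝ → ℂ) = c • expI 0 := by
    funext θ
    simp [expI_zero]
  exact h ▸ Submodule.smul_mem _ c (expI_mem_trigPoly (by simp))

lemma trigPoly_mono : Monotone trigPoly := fun _ _ hNK =>
  Submodule.span_mono (image_mono fun j (hj : |j| ≤ _) => hj.trans (by exact_mod_cast hNK))

section TrigPoly

variable {N : ℕ} {T : ℝ → ℂ}

lemma mul_mem_trigPoly {K : ℕ} {S : ℝ → ℂ} (hS : S ∈ trigPoly N) (hT : T ∈ trigPoly K) :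
    S * T ∈ trigPoly (N + K) := by
  have hST : S * T ∈ trigPoly N * trigPoly K := Submodule.mul_mem_mul hS hT
  rw [trigPoly, trigPoly, Submodule.span_mul_span] at hST
  refine Submodule.span_le.2 ?_ hST
  rintro _ ⟨_, ⟨j, hj, rfl⟩, _, ⟨l, hl, rfl⟩, rfl⟩
  have hjl : expI (j + l) = expI j * expI l := funext (expI_add j l)
  change expI j * expI l ∈ trigPoly (N + K)
  refine hjl ▸ expI_mem_trigPoly ((abs_add_le j l).trans ?_)
  push_cast
  exact add_le_add hj hl

lemma pow_mem_trigPoly (hT : T ∈ trigPoly N) (m : ℕ) : T ^ m ∈ trigPoly (m * N) := by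
  induction m with
  | zero => simpa using! const_mem_trigPoly 1
  | succ m ih => simpa only [pow_succ, Nat.succ_mul] using mul_mem_trigPoly ih hT

lemma comp_add_const_mem_trigPoly (hT : T ∈ trigPoly N) (c : ℝ) :
    (fun θ => T (θ + c)) ∈ trigPoly N := by
  induction hT using Submodule.span_induction with
  | mem _ hx =>
    obtain ⟨j, hj, rfl⟩ := hx
    have h : (fun θ => expI j (θ + c)) = expI j c • expI j := by
      funext θ
      simp [expI_add_right, mul_comm]
    exact h ▸ Submodule.smul_mem _ _ (expI_mem_trigPoly hj)
  | zero => exact Submodule.zero_mem _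
  | add _ _ _ _ hx hy => exact Submodule.add_mem _ hx hy
  | smul a _ _ hx => exact Submodule.smul_mem _ a hx

lemma periodic_of_mem_trigPoly (hT : T ∈ trigPoly N) : Function.Periodic T (2 * π) := by
  induction hT using Submodule.span_induction with
  | mem _ hx =>
    obtain ⟨j, -, rfl⟩ := hx
    exact expI_periodic j
  | zero => exact fun _ => rfl
  | add _ _ _ _ hx hy => exact hx.add hy
  | smul a _ _ hx => exact hx.smul a

lemma differentiable_of_mem_trigPoly (hT : T ∈ trigPoly N) : Differentiable ℝ T := by
  induction hT using Submodule.span_induction with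
  | mem _ hx =>
    obtain ⟨j, -, rfl⟩ := hx
    exact fun θ => (hasDerivAt_expI j θ).differentiableAt
  | zero => exact differentiable_const 0
  | add _ _ _ _ hx hy => exact hx.add hy
  | smul a _ _ hx => exact hx.const_smul a

lemma deriv_mem_trigPoly (hT : T ∈ trigPoly N) : deriv T ∈ trigPoly N := by
  induction hT using Submodule.span_induction with
  | mem _ hx =>
    obtain ⟨j, hj, rfl⟩ := hx
    have h : deriv (expI j) = ((j : ℂ) * Complex.I) • expI j :=
      funext fun θ => (hasDerivAt_expI j θ).deriv
    exact h ▸ Submodule.smul_mem _ _ (expI_mem_trigPoly hj)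
  | zero =>
    have h : deriv (0 : ℝ → ℂ) = 0 := funext fun θ => deriv_const θ 0
    simp only [h, Submodule.zero_mem]
  | add S T hS hT ihS ihT =>
    have h : deriv (S + T) = deriv S + deriv T := funext fun θ =>
      deriv_add (differentiable_of_mem_trigPoly hS θ) (differentiable_of_mem_trigPoly hT θ)
    exact h ▸ Submodule.add_mem _ ihS ihT
  | smul a T hT ih =>
    have h : deriv (a • T) = a • deriv T := funext fun θ =>
      deriv_const_smul a (differentiable_of_mem_trigPoly hT θ)
    exact h ▸ Submodule.smul_mem _ a ih

lemma continuous_of_mem_trigPoly (hT : T ∈ trigPoly N) : Continuous T :=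
  (differentiable_of_mem_trigPoly hT).continuous

end TrigPoly

/-! ### The Fejér kernel and the interpolation formula for the derivative -/

/-- The Fejér kernel `F_N(t) = N⁻¹ |∑_{a < N} e^{iat}|²`, of degree less than `N`. -/
def fejer (N : ℕ) (t : ℝ) : ℝ := ‖∑ a ∈ Finset.range N, expI a t‖ ^ 2 / N

lemma card_filter_natCast_sub_natCast_eq (N : ℕ) (l : ℤ) :
    ((Finset.range N ×ˢ Finset.range N).filter fun ab => (ab.1 - ab.2 : ℤ) = l).card =
      N - l.natAbs := by
  rw [← Finset.card_range (N - l.natAbs)]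
  refine Finset.card_nbij' (fun ab => min ab.1 ab.2)
    (fun c => (c + l.toNat, c + (-l).toNat)) ?_ ?_ ?_ ?_
  · rintro ⟨a, b⟩ h
    simp only [Finset.coe_filter, Finset.mem_product, Finset.mem_range, mem_ofPred_eq,
      Finset.coe_range, mem_Iio] at h ⊢
    omega
  · intro c hc
    simp only [Finset.coe_filter, Finset.mem_product, Finset.mem_range, mem_ofPred_eq,
      Finset.coe_range, mem_Iio] at hc ⊢
    omega
  · rintro ⟨a, b⟩ h
    simp only [Finset.coe_filter, Finset.mem_product, Finset.mem_range, mem_ofPred_eq,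
      Prod.mk.injEq] at h ⊢
    omega
  · intro c _
    simp only
    omega

lemma natCast_mul_fejer_eq_sum (N : ℕ) (t : ℝ) :
    (N * fejer N t : ℂ) =
      ∑ l ∈ Finset.Icc (-N : ℤ) N, ((N - l.natAbs : ℕ) : ℂ) * expI l t := by
  have hmaps : ∀ ab ∈ Finset.range N ×ˢ Finset.range N,
      (ab.1 - ab.2 : ℤ) ∈ Finset.Icc (-N : ℤ) N := by
    simp only [Finset.mem_product, Finset.mem_range, Finset.mem_Icc]
    omega
  have hexpand : (N * fejer N t : ℂ) =
      ∑ ab ∈ Finset.range N ×ˢ Finset.range N, expI (ab.1 - ab.2) t := by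
    have hN : (N * fejer N t : ℂ) = (‖∑ a ∈ Finset.range N, expI a t‖ : ℂ) ^ 2 := by
      rcases eq_or_ne N 0 with rfl | hN
      · simp
      · rw [fejer]
        push_cast
        field_simp
    rw [hN, ← Complex.mul_conj', map_sum, Finset.sum_mul_sum, ← Finset.sum_product']
    simp only [conj_expI, ← expI_add, sub_eq_add_neg]
  rw [hexpand, ← Finset.sum_fiberwise_of_maps_to' hmaps fun l => expI l t]
  simp only [Finset.sum_const, card_filter_natCast_sub_natCast_eq, nsmul_eq_mul]

lemma fejer_nonneg (N : ℕ) (t : ℝ) : 0 ≤ fejer N t := by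
  unfold fejer
  positivity

lemma fejer_le (N : ℕ) (t : ℝ) : fejer N t ≤ N := by
  have h : ‖∑ a ∈ Finset.range N, expI a t‖ ≤ N :=
    (norm_sum_le _ _).trans (by simp [norm_expI])
  refine div_le_of_le_mul₀ N.cast_nonneg N.cast_nonneg ?_
  rw [← sq]
  gcongr

lemma fejer_zero_right (N : ℕ) : fejer N 0 = N := by
  simp [fejer, expI_zero_right, sq]

lemma fejer_neg (N : ℕ) (t : ℝ) : fejer N (-t) = fejer N t := by
  have h : ∑ a ∈ Finset.range N, expI a (-t) =
      (starRingEnd ℂ) (∑ a ∈ Finset.range N, expI a t) := by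
    simp only [map_sum, conj_expI, expI_neg_right]
  rw [fejer, h, Complex.norm_conj, fejer]

lemma continuous_fejer (N : ℕ) : Continuous (fejer N) := by
  have h := continuous_finsetSum (Finset.range N) fun a _ => continuous_expI a
  exact (h.norm.pow 2).div_const _

lemma fejer_mem_trigPoly {N : ℕ} (hN : N ≠ 0) : (fun t => (fejer N t : ℂ)) ∈ trigPoly N := by
  have h : (fun t => (fejer N t : ℂ)) = (N : ℂ)⁻¹ •
      ∑ l ∈ Finset.Icc (-N : ℤ) N, ((N - l.natAbs : ℕ) : ℂ) • expI l := by
    funext t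
    simp only [Pi.smul_apply, Finset.sum_apply, smul_eq_mul, ← natCast_mul_fejer_eq_sum]
    field_simp
  rw [h]
  exact Submodule.smul_mem _ _ (Submodule.sum_mem _ fun l hl => Submodule.smul_mem _ _
    (expI_mem_trigPoly (abs_le.2 (Finset.mem_Icc.1 hl))))

-- The subtraction in the coefficient is truncated: it vanishes when `N ≤ |j - s|`.
lemma sum_expI_mul_fejer_mul_expI {N : ℕ} (hN : N ≠ 0) {s j : ℤ} (hs : |s| ≤ N) (hj : |j| ≤ N)
    (u θ : ℝ) :
    ∑ k ∈ Finset.range (4 * N), expI s (u - node (4 * N) k) * fejer N (u - node (4 * N) k) *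
        expI j (θ + node (4 * N) k) =
      4 * ((N - (j - s).natAbs : ℕ) : ℂ) * expI j (θ + u) := by
  have hN' : (N : ℂ) ≠ 0 := by exact_mod_cast hN
  rw [abs_le] at hs hj
  have hterm (k : ℕ) : N * (expI s (u - node (4 * N) k) * fejer N (u - node (4 * N) k) *
        expI j (θ + node (4 * N) k)) = ∑ l ∈ Finset.Icc (-N : ℤ) N, ((N - l.natAbs : ℕ) : ℂ) *
        (expI (s + l) (u - node (4 * N) k) * expI j (θ + node (4 * N) k)) := by
    calc _ = expI s (u - node (4 * N) k) * (N * fejer N (u - node (4 * N) k)) *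
          expI j (θ + node (4 * N) k) := by ring
      _ = _ := by
        rw [natCast_mul_fejer_eq_sum, Finset.mul_sum, Finset.sum_mul]
        exact Finset.sum_congr rfl fun l _ => by rw [expI_add]; ring
  have hinner : ∀ l ∈ Finset.Icc (-N : ℤ) N, ∑ k ∈ Finset.range (4 * N),
      expI (s + l) (u - node (4 * N) k) * expI j (θ + node (4 * N) k) =
        if l = j - s then ((4 * N : ℕ) : ℂ) * expI j (θ + u) else 0 := by
    intro l hl
    rw [Finset.mem_Icc] at hl
    rw [sum_expI_sub_node_mul_expI_add_node (by rw [abs_lt]; omega)]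
    simp only [eq_sub_iff_add_eq']
  refine mul_left_cancel₀ hN' ?_
  rw [Finset.mul_sum, Finset.sum_congr rfl fun k _ => hterm k, Finset.sum_comm]
  simp_rw [← Finset.mul_sum]
  rw [Finset.sum_congr rfl fun l hl => congrArg _ (hinner l hl)]
  simp only [mul_ite, mul_zero, Finset.sum_ite_eq', Finset.mem_Icc]
  split_ifs with hmem
  · push_cast
    ring
  · rw [Nat.sub_eq_zero_of_le (by omega)]
    simp

lemma sum_fejer_sub_node {N : ℕ} (hN : N ≠ 0) (u : ℝ) :
    ∑ k ∈ Finset.range (4 * N), fejer N (u - node (4 * N) k) = 4 * N := by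
  have h := sum_expI_mul_fejer_mul_expI hN (s := 0) (j := 0) (by simp) (by simp) u 0
  simp only [expI_zero, one_mul, mul_one, sub_self, Int.natAbs_zero, tsub_zero] at h
  exact_mod_cast h

theorem deriv_eq_sum_sin_mul_fejer {N : ℕ} (hN : N ≠ 0) {T : ℝ → ℂ} (hT : T ∈ trigPoly N)
    (θ u : ℝ) :
    deriv T (θ + u) = -(1 / 2) * ∑ k ∈ Finset.range (4 * N),
      (sin (N * (u - node (4 * N) k)) * fejer N (u - node (4 * N) k) : ℝ) *
        T (θ + node (4 * N) k) := by
  induction hT using Submodule.span_induction with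
  | mem _ hx =>
    obtain ⟨j, hj : |j| ≤ N, rfl⟩ := hx
    have hcoeff : (((N - (j - -N).natAbs : ℕ) : ℂ) - ((N - (j - N).natAbs : ℕ) : ℂ)) = -j := by
      rw [abs_le] at hj
      have : ((N - (j - -N).natAbs : ℕ) : ℤ) - ((N - (j - N).natAbs : ℕ) : ℤ) = -j := by omega
      exact_mod_cast this
    have hterm (t : ℝ) (z : ℂ) : ((sin (N * t) * fejer N t : ℝ) : ℂ) * z =
        Complex.I / 2 * (expI (-N) t * fejer N t * z - expI N t * fejer N t * z) := by
      rw [Complex.ofReal_mul, sin_natCast_mul_eq_expI]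
      ring
    simp only [hterm, ← Finset.mul_sum, Finset.sum_sub_distrib]
    rw [(hasDerivAt_expI j _).deriv, sum_expI_mul_fejer_mul_expI hN (by simp) hj,
      sum_expI_mul_fejer_mul_expI hN (by simp) hj, ← sub_mul, ← mul_sub, hcoeff]
    ring
  | zero => simp
  | add S T hS hT ihS ihT =>
    rw [deriv_add (differentiable_of_mem_trigPoly hS _) (differentiable_of_mem_trigPoly hT _),
      ihS, ihT, ← mul_add, ← Finset.sum_add_distrib]
    simp only [Pi.add_apply, mul_add]
  | smul a T hT ih =>
    rw [deriv_const_smul a (differentiable_of_mem_trigPoly hT _), ih, smul_eq_mul,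
      mul_left_comm, Finset.mul_sum]
    simp only [Pi.smul_apply, smul_eq_mul, mul_left_comm]

lemma norm_deriv_le_sum_fejer {N : ℕ} (hN : N ≠ 0) {T : ℝ → ℂ} (hT : T ∈ trigPoly N)
    (θ u : ℝ) :
    ‖deriv T (θ + u)‖ ≤ ∑ k ∈ Finset.range (4 * N),
      fejer N (u - node (4 * N) k) / 2 * ‖T (θ + node (4 * N) k)‖ := by
  rw [deriv_eq_sum_sin_mul_fejer hN hT, norm_mul]
  refine (mul_le_mul_of_nonneg_left (norm_sum_le _ _) (norm_nonneg _)).trans ?_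
  rw [Finset.mul_sum]
  refine Finset.sum_le_sum fun k _ => ?_
  have hsin : |sin (N * (u - node (4 * N) k)) * fejer N (u - node (4 * N) k)| ≤
      fejer N (u - node (4 * N) k) := by
    rw [abs_mul, abs_of_nonneg (fejer_nonneg _ _)]
    exact mul_le_of_le_one_left (fejer_nonneg _ _) (abs_sin_le_one _)
  have hhalf : ‖(-(1 / 2) : ℂ)‖ = 1 / 2 := by norm_num
  rw [norm_mul, Complex.norm_real, norm_eq_abs, hhalf, ← mul_assoc, one_div_mul_eq_div]
  gcongr

lemma norm_sum_expI_mul_abs_sin_le (n : ℕ) (t : ℝ) :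
    ‖∑ a ∈ Finset.range n, expI a t‖ * |sin t| ≤ 2 := by
  have hgeom : (∑ a ∈ Finset.range n, expI a t) * (expI 1 t - 1) = expI n t - 1 := by
    have hpow (a : ℕ) : expI a t = expI 1 t ^ a := by
      rw [expI, expI, ← Complex.exp_nat_mul]
      push_cast
      ring_nf
    simp only [hpow, geom_sum_mul]
  have hsin : |sin t| ≤ ‖expI 1 t - 1‖ := by
    simpa [expI, Complex.exp_ofReal_mul_I_im] using Complex.abs_im_le_norm (expI 1 t - 1)
  calc ‖∑ a ∈ Finset.range n, expI a t‖ * |sin t|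
      ≤ ‖∑ a ∈ Finset.range n, expI a t‖ * ‖expI 1 t - 1‖ := by gcongr
    _ = ‖expI n t - 1‖ := by rw [← norm_mul, hgeom]
    _ ≤ ‖expI n t‖ + ‖(1 : ℂ)‖ := norm_sub_le _ _
    _ = 2 := by rw [norm_expI, norm_one]; norm_num

lemma fejer_div_mul_one_add_le (n : ℕ) (t : ℝ) : fejer n t / n * (1 + n * |sin t|) ≤ 3 := by
  set A := ‖∑ a ∈ Finset.range n, expI a t‖ with hA
  have hAn : A ≤ n := (norm_sum_le _ _).trans (by simp [norm_expI])
  have hA1 : A / n ≤ 1 := div_le_one_of_le₀ hAn n.cast_nonneg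
  calc fejer n t / n * (1 + n * |sin t|)
      = A / n * (A / n) + A / n * (A / n * n * |sin t|) := by rw [fejer, ← hA]; ring
    _ ≤ 1 * 1 + 1 * (A * |sin t|) := by
        gcongr
        rw [div_mul_eq_mul_div, mul_div_assoc]
        exact mul_le_of_le_one_right (norm_nonneg _) (div_self_le_one _)
    _ ≤ 3 := by linarith [norm_sum_expI_mul_abs_sin_le n t]

/-! ### Moderate weights and localisation -/

/-- A nonnegative continuous weight on the circle that varies at most polynomially, with exponent
`m`, at the scale `1 / n`. Taking `t = ±2π` in the last field shows that it is `2π`-periodic. -/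
structure IsModerateWeight (n m : ℕ) (w : ℝ → ℝ) : Prop where
  nonneg : ∀ θ, 0 ≤ w θ
  continuous : Continuous w
  le_shift : ∀ θ t, w θ ≤ (1 + n * |sin t|) ^ m * w (θ + t)

lemma IsModerateWeight.periodic {n m : ℕ} {w : ℝ → ℝ} (hw : IsModerateWeight n m w) :
    Function.Periodic w (2 * π) := by
  intro θ
  have hle := hw.le_shift θ (2 * π)
  have hge := hw.le_shift (θ + 2 * π) (-(2 * π))
  simp only [sin_neg, sin_two_pi, neg_zero, abs_zero, mul_zero, add_zero, one_pow, one_mul,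
    add_neg_cancel_right] at hle hge
  exact le_antisymm hge hle

/-- The polynomial `T` multiplied by the `m`-th power of a Fejér kernel peaked at `θ` with
value `1`. -/
def localize (n m : ℕ) (θ : ℝ) (T : ℝ → ℂ) (φ : ℝ) : ℂ :=
  (fejer n (φ - θ) / n : ℂ) ^ m * T φ

section Localize

variable {n m : ℕ} {T : ℝ → ℂ}

lemma localize_mem_trigPoly (hn : n ≠ 0) (m : ℕ) (hT : T ∈ trigPoly n) (θ : ℝ) :
    localize n m θ T ∈ trigPoly ((m + 1) * n) := by
  have hF : (fun φ => (fejer n (φ - θ) / n : ℂ)) ∈ trigPoly n := by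
    have h := Submodule.smul_mem _ (n : ℂ)⁻¹
      (comp_add_const_mem_trigPoly (fejer_mem_trigPoly hn) (-θ))
    simpa only [Pi.smul_def, smul_eq_mul, ← sub_eq_add_neg, inv_mul_eq_div] using h
  rw [Nat.succ_mul]
  exact mul_mem_trigPoly (pow_mem_trigPoly hF m) hT

lemma norm_localize (n m : ℕ) (θ φ : ℝ) (T : ℝ → ℂ) :
    ‖localize n m θ T φ‖ = (fejer n (φ - θ) / n) ^ m * ‖T φ‖ := by
  rw [localize, norm_mul, norm_pow, norm_div, Complex.norm_real, Complex.norm_natCast,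
    norm_of_nonneg (fejer_nonneg _ _)]

lemma norm_localize_le (n m : ℕ) (θ φ : ℝ) (T : ℝ → ℂ) : ‖localize n m θ T φ‖ ≤ ‖T φ‖ := by
  rw [norm_localize]
  exact mul_le_of_le_one_left (norm_nonneg _) (pow_le_one₀
    (div_nonneg (fejer_nonneg _ _) n.cast_nonneg)
    (div_le_one_of_le₀ (fejer_le _ _) n.cast_nonneg))

lemma localize_self (hn : n ≠ 0) (m : ℕ) (θ : ℝ) (T : ℝ → ℂ) : localize n m θ T θ = T θ := by
  simp [localize, fejer_zero_right, hn]

lemma hasDerivAt_fejer_zero (hn : n ≠ 0) : HasDerivAt (fun t => (fejer n t : ℂ)) 0 0 := by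
  have hdiff := differentiable_of_mem_trigPoly (fejer_mem_trigPoly hn) 0
  have heven := deriv_comp_neg (fun t => (fejer n t : ℂ)) 0
  simp only [fejer_neg, neg_zero, self_eq_neg] at heven
  exact heven ▸ hdiff.hasDerivAt

lemma deriv_localize_self (hn : n ≠ 0) (m : ℕ) {θ : ℝ} (hT : DifferentiableAt ℝ T θ) :
    deriv (localize n m θ T) θ = deriv T θ := by
  have hF : HasDerivAt (fun φ => (fejer n (φ - θ) / n : ℂ)) 0 θ := by
    have h := (sub_self θ).symm ▸ hasDerivAt_fejer_zero hn
    simpa using (h.comp_sub_const θ θ).div_const (n : ℂ)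
  have h : HasDerivAt (localize n m θ T) _ θ := (hF.pow m).mul hT.hasDerivAt
  rw [h.deriv]
  simp [fejer_zero_right, hn]

lemma IsModerateWeight.mul_norm_localize_le {w : ℝ → ℝ} (hw : IsModerateWeight n m w)
    (θ φ : ℝ) (T : ℝ → ℂ) : w θ * ‖localize n m θ T φ‖ ≤ 3 ^ m * (w φ * ‖T φ‖) := by
  have hF : 0 ≤ fejer n (φ - θ) / n := div_nonneg (fejer_nonneg _ _) n.cast_nonneg
  have hshift : w θ ≤ (1 + n * |sin (φ - θ)|) ^ m * w φ := by
    simpa using hw.le_shift θ (φ - θ)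
  have hwφ := hw.nonneg φ
  calc w θ * ‖localize n m θ T φ‖
      ≤ (1 + n * |sin (φ - θ)|) ^ m * w φ * ((fejer n (φ - θ) / n) ^ m * ‖T φ‖) := by
        rw [norm_localize]
        gcongr
    _ = (fejer n (φ - θ) / n * (1 + n * |sin (φ - θ)|)) ^ m * (w φ * ‖T φ‖) := by
        rw [mul_pow]
        ring
    _ ≤ 3 ^ m * (w φ * ‖T φ‖) := by
        gcongr
        exact fejer_div_mul_one_add_le _ _

end Localize

/-- The nodes of the interpolation formula for polynomials of degree `(m + 1) n`. -/
def locNode (n m k : ℕ) : ℝ := node (4 * ((m + 1) * n)) k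

/-- The weight of `locNode n m k` in the bound for the derivative, at distance `u` from the
centre, of a localised polynomial of degree `n`. -/
def locCoeff (n m k : ℕ) (u : ℝ) : ℝ :=
  3 ^ m * (fejer ((m + 1) * n) (u - locNode n m k) / 2)

lemma locCoeff_nonneg (n m k : ℕ) (u : ℝ) : 0 ≤ locCoeff n m k u := by
  have := fejer_nonneg ((m + 1) * n) (u - locNode n m k)
  unfold locCoeff
  positivity

lemma continuous_locCoeff (n m k : ℕ) : Continuous (locCoeff n m k) := by
  have := continuous_fejer ((m + 1) * n)
  unfold locCoeff
  fun_prop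

lemma sum_locCoeff {n : ℕ} (hn : n ≠ 0) (m : ℕ) (u : ℝ) :
    ∑ k ∈ Finset.range (4 * ((m + 1) * n)), locCoeff n m k u = 2 * (m + 1) * 3 ^ m * n := by
  simp only [locCoeff, locNode, ← Finset.mul_sum, ← Finset.sum_div]
  rw [sum_fejer_sub_node (mul_ne_zero m.succ_ne_zero hn)]
  push_cast
  ring

lemma sum_integral_locCoeff {n : ℕ} (hn : n ≠ 0) (m : ℕ) (h : ℝ) :
    ∑ k ∈ Finset.range (4 * ((m + 1) * n)), ∫ u in (0 : ℝ)..h, locCoeff n m k u =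
      2 * (m + 1) * 3 ^ m * n * h := by
  rw [← intervalIntegral.integral_finsetSum fun k _ =>
    (continuous_locCoeff n m k).intervalIntegrable _ _]
  simp only [sum_locCoeff hn, intervalIntegral.integral_const, sub_zero, smul_eq_mul]
  ring

namespace IsModerateWeight

variable {n m : ℕ} {w : ℝ → ℝ} {T : ℝ → ℂ}

lemma mul_norm_deriv_localize_le (hw : IsModerateWeight n m w) (hn : n ≠ 0)
    (hT : T ∈ trigPoly n) (θ u : ℝ) :
    w θ * ‖deriv (localize n m θ T) (θ + u)‖ ≤
      ∑ k ∈ Finset.range (4 * ((m + 1) * n)), locCoeff n m k u *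
        (w (θ + locNode n m k) * ‖T (θ + locNode n m k)‖) := by
  have hloc := norm_deriv_le_sum_fejer (mul_ne_zero m.succ_ne_zero hn)
    (localize_mem_trigPoly hn m hT θ) θ u
  refine (mul_le_mul_of_nonneg_left hloc (hw.nonneg θ)).trans ?_
  rw [Finset.mul_sum]
  refine Finset.sum_le_sum fun k _ => ?_
  have hF := fejer_nonneg ((m + 1) * n) (u - locNode n m k)
  calc w θ * (fejer ((m + 1) * n) (u - locNode n m k) / 2 *
        ‖localize n m θ T (θ + locNode n m k)‖)
      = fejer ((m + 1) * n) (u - locNode n m k) / 2 *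
        (w θ * ‖localize n m θ T (θ + locNode n m k)‖) := by ring
    _ ≤ fejer ((m + 1) * n) (u - locNode n m k) / 2 *
        (3 ^ m * (w (θ + locNode n m k) * ‖T (θ + locNode n m k)‖)) := by
        gcongr ?_ * ?_
        exact hw.mul_norm_localize_le _ _ _
    _ = _ := by rw [locCoeff]; ring

lemma mul_norm_deriv_le (hw : IsModerateWeight n m w) (hn : n ≠ 0) (hT : T ∈ trigPoly n)
    (θ : ℝ) :
    w θ * ‖deriv T θ‖ ≤ ∑ k ∈ Finset.range (4 * ((m + 1) * n)), locCoeff n m k 0 *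
        (w (θ + locNode n m k) * ‖T (θ + locNode n m k)‖) := by
  rw [← deriv_localize_self hn m (differentiable_of_mem_trigPoly hT θ)]
  simpa only [add_zero] using hw.mul_norm_deriv_localize_le hn hT θ 0

lemma mul_norm_localize_sub_le (hw : IsModerateWeight n m w) (hn : n ≠ 0)
    (hT : T ∈ trigPoly n) (θ : ℝ) {h : ℝ} (hh : 0 ≤ h) :
    w θ * ‖localize n m θ T (θ + h) - localize n m θ T θ‖ ≤
      ∑ k ∈ Finset.range (4 * ((m + 1) * n)), (∫ u in (0 : ℝ)..h, locCoeff n m k u) *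
        (w (θ + locNode n m k) * ‖T (θ + locNode n m k)‖) := by
  set f := localize n m θ T
  have hf : f ∈ trigPoly ((m + 1) * n) := localize_mem_trigPoly hn m hT θ
  have hf' : Continuous fun u => deriv f (θ + u) :=
    (continuous_of_mem_trigPoly (deriv_mem_trigPoly hf)).comp (by fun_prop)
  have hcoeff (k : ℕ) (c : ℝ) : Continuous fun u => locCoeff n m k u * c :=
    (continuous_locCoeff n m k).mul_const c
  have hftc : f (θ + h) - f θ = ∫ u in (0 : ℝ)..h, deriv f (θ + u) := by
    have := intervalIntegral.integral_eq_sub_of_hasDerivAt (f := fun u => f (θ + u))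
      (fun u _ => (differentiable_of_mem_trigPoly hf (θ + u)).hasDerivAt.comp_const_add θ u)
      (hf'.intervalIntegrable 0 h)
    rw [this, add_zero]
  have hwθ := hw.nonneg θ
  simp_rw [← intervalIntegral.integral_mul_const]
  rw [hftc, ← intervalIntegral.integral_finsetSum fun k _ =>
    (hcoeff k _).intervalIntegrable _ _]
  calc w θ * ‖∫ u in (0 : ℝ)..h, deriv f (θ + u)‖
      ≤ w θ * ∫ u in (0 : ℝ)..h, ‖deriv f (θ + u)‖ := by
        gcongr
        exact intervalIntegral.norm_integral_le_integral_norm hh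
    _ = ∫ u in (0 : ℝ)..h, w θ * ‖deriv f (θ + u)‖ :=
        (intervalIntegral.integral_const_mul _ _).symm
    _ ≤ _ := intervalIntegral.integral_mono_on hh
        ((hf'.norm.const_mul _).intervalIntegrable _ _)
        ((continuous_finsetSum _ fun k _ => hcoeff k _).intervalIntegrable _ _)
        fun u _ => hw.mul_norm_deriv_localize_le hn hT θ u

lemma mul_norm_le_add (hw : IsModerateWeight n m w) (hn : n ≠ 0) (hT : T ∈ trigPoly n)
    (θ : ℝ) {h : ℝ} (hh : 0 ≤ h) :
    w θ * ‖T θ‖ ≤ w θ * ‖T (θ + h)‖ +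
      ∑ k ∈ Finset.range (4 * ((m + 1) * n)), (∫ u in (0 : ℝ)..h, locCoeff n m k u) *
        (w (θ + locNode n m k) * ‖T (θ + locNode n m k)‖) := by
  have htri : ‖T θ‖ ≤ ‖T (θ + h)‖ + ‖localize n m θ T (θ + h) - localize n m θ T θ‖ := by
    rw [← localize_self hn m θ T]
    refine (norm_le_norm_add_norm_sub (localize n m θ T (θ + h)) _).trans ?_
    gcongr
    exact norm_localize_le _ _ _ _ _
  calc w θ * ‖T θ‖ ≤ w θ * (‖T (θ + h)‖ +
        ‖localize n m θ T (θ + h) - localize n m θ T θ‖) :=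
        mul_le_mul_of_nonneg_left htri (hw.nonneg θ)
    _ ≤ _ := by
        rw [mul_add]
        gcongr
        exact hw.mul_norm_localize_sub_le hn hT θ hh

end IsModerateWeight

/-! ### `L^p` norms over a period -/

lemma le_ofReal_mul_trans {a b : ℝ} (ha : 0 ≤ a) {x y z : ℝ≥0∞} (hxy : x ≤ ENNReal.ofReal a * y)
    (hyz : y ≤ ENNReal.ofReal b * z) : x ≤ ENNReal.ofReal (a * b) * z := by
  rw [ENNReal.ofReal_mul ha, mul_assoc]
  exact hxy.trans (by gcongr)

lemma le_two_mul_of_le_add_half_mul {x a : ℝ≥0∞} (hx : x ≠ ⊤)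
    (h : x ≤ a + ENNReal.ofReal (1 / 2) * x) : x ≤ ENNReal.ofReal 2 * a := by
  rcases eq_or_ne a ⊤ with rfl | ha
  · simp
  have hhalf : (ENNReal.ofReal (1 / 2) * x).toReal = x.toReal / 2 := by
    rw [ENNReal.toReal_mul, ENNReal.toReal_ofReal (by norm_num)]
    ring
  have hreal := ENNReal.toReal_mono (by finiteness) h
  rw [ENNReal.toReal_add ha (by finiteness), hhalf] at hreal
  rw [← ENNReal.toReal_le_toReal hx (by finiteness), ENNReal.toReal_mul,
    ENNReal.toReal_ofReal zero_le_two]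
  linarith

lemma eLpNorm_restrict_Ioc_eq_of_periodic {E : Type*} [NormedAddCommGroup E] {c : ℝ} (hc : 0 < c)
    {g : ℝ → E} (hg : Continuous g) (hper : Function.Periodic g c) (p : ℝ≥0∞) (a b : ℝ) :
    eLpNorm g p (volume.restrict (Ioc a (a + c))) =
      eLpNorm g p (volume.restrict (Ioc b (b + c))) := by
  have : Fact (0 < c) := ⟨hc⟩
  have hlift : Continuous (hper.lift : AddCircle c → E) := continuous_quot_lift _ hg
  have hcircle (d : ℝ) : eLpNorm g p (volume.restrict (Ioc d (d + c))) =
      eLpNorm (hper.lift : AddCircle c → E) p volume := by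
    rw [← eLpNorm_comp_measurePreserving hlift.aestronglyMeasurable
      (AddCircle.measurePreserving_mk c d)]
    rfl
  rw [hcircle, hcircle]

/-- Lebesgue measure on the period `(-π, π]`. -/
abbrev periodMeasure : Measure ℝ := volume.restrict (Ioc (-π) π)

section PeriodMeasure

variable {g : ℝ → ℝ} {p : ℝ≥0∞}

lemma eLpNorm_periodMeasure_eq (hg : Continuous g) (hper : Function.Periodic g (2 * π))
    (p : ℝ≥0∞) (a : ℝ) :
    eLpNorm g p periodMeasure = eLpNorm g p (volume.restrict (Ioc a (a + 2 * π))) := by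
  rw [eLpNorm_restrict_Ioc_eq_of_periodic two_pi_pos hg hper p a (-π)]
  ring_nf

lemma eLpNorm_comp_add_right_periodMeasure (hg : Continuous g)
    (hper : Function.Periodic g (2 * π)) (p : ℝ≥0∞) (s : ℝ) :
    eLpNorm (fun θ => g (θ + s)) p periodMeasure = eLpNorm g p periodMeasure := by
  have hpre : (fun θ : ℝ => θ + s) ⁻¹' Ioc (-π + s) (-π + s + 2 * π) = Ioc (-π) π := by
    rw [preimage_add_const_Ioc]
    ring_nf
  have hmp := (measurePreserving_add_right (volume : Measure ℝ) s).restrict_preimage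
    (s := Ioc (-π + s) (-π + s + 2 * π)) measurableSet_Ioc
  rw [hpre] at hmp
  rw [eLpNorm_periodMeasure_eq hg hper p (-π + s)]
  exact eLpNorm_comp_measurePreserving hg.aestronglyMeasurable hmp

lemma eLpNorm_periodMeasure_ne_top (hg : Continuous g) (p : ℝ≥0∞) :
    eLpNorm g p periodMeasure ≠ ⊤ := by
  obtain ⟨C, hC⟩ := isCompact_Icc.exists_bound_of_continuousOn (s := Icc (-π) π) hg.continuousOn
  have hmem : MemLp g p periodMeasure := .of_bound hg.aestronglyMeasurable C <|
    (ae_restrict_mem measurableSet_Ioc).mono fun θ hθ => hC θ (Ioc_subset_Icc_self hθ)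
  exact hmem.eLpNorm_ne_top

lemma eLpNorm_sum_translates_le {ι : Type*} (hp : 1 ≤ p) (hg : Continuous g)
    (hper : Function.Periodic g (2 * π)) {c : ι → ℝ} (hc : ∀ k, 0 ≤ c k) (s : ι → ℝ)
    (I : Finset ι) :
    eLpNorm (fun θ => ∑ k ∈ I, c k * g (θ + s k)) p periodMeasure ≤
      ENNReal.ofReal (∑ k ∈ I, c k) * eLpNorm g p periodMeasure := by
  have hfun : (fun θ => ∑ k ∈ I, c k * g (θ + s k)) = ∑ k ∈ I, c k • fun θ => g (θ + s k) := by
    ext θ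
    simp
  have hmeas (k : ι) : AEStronglyMeasurable (c k • fun θ => g (θ + s k)) periodMeasure :=
    ((hg.comp (continuous_add_const (s k))).const_smul (c k)).aestronglyMeasurable
  rw [hfun, ENNReal.ofReal_sum_of_nonneg fun k _ => hc k, Finset.sum_mul]
  refine (eLpNorm_sum_le (fun k _ => hmeas k) hp).trans (Finset.sum_le_sum fun k _ => ?_)
  rw [eLpNorm_const_smul, eLpNorm_comp_add_right_periodMeasure hg hper,
    Real.enorm_eq_ofReal (hc k)]

end PeriodMeasure

/-- The weighted norm `‖w T‖_p` over a period. -/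
def periodNorm (p : ℝ≥0∞) (w : ℝ → ℝ) (T : ℝ → ℂ) : ℝ≥0∞ :=
  eLpNorm (fun θ => w θ * ‖T θ‖) p periodMeasure

/-! ### Inequalities for moderate weights -/

/-- A step along which a trigonometric polynomial of degree `n` with a moderate weight changes by
at most half of its norm. -/
def stepLength (n m : ℕ) : ℝ := 1 / (4 * (m + 1) * 3 ^ m * n)

lemma stepLength_pos {n : ℕ} (hn : n ≠ 0) (m : ℕ) : 0 < stepLength n m := by
  unfold stepLength
  positivity

lemma natCast_mul_stepLength_le_one (n m : ℕ) : n * stepLength n m ≤ 1 := by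
  have hm : (1 : ℝ) ≤ 4 * (m + 1) * 3 ^ m := one_le_mul_of_one_le_of_one_le
    (by linarith [m.cast_nonneg (α := ℝ)]) (one_le_pow₀ (by norm_num))
  rw [stepLength, mul_one_div]
  exact div_le_one_of_le₀ (le_mul_of_one_le_left n.cast_nonneg hm) (by positivity)

lemma stepLength_le_one {n : ℕ} (hn : n ≠ 0) (m : ℕ) : stepLength n m ≤ 1 :=
  (le_mul_of_one_le_left (stepLength_pos hn m).le (by exact_mod_cast Nat.one_le_iff_ne_zero.2 hn))
    |>.trans (natCast_mul_stepLength_le_one n m)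

lemma sum_integral_locCoeff_stepLength {n : ℕ} (hn : n ≠ 0) (m : ℕ) :
    ∑ k ∈ Finset.range (4 * ((m + 1) * n)), ∫ u in (0 : ℝ)..stepLength n m, locCoeff n m k u =
      1 / 2 := by
  rw [sum_integral_locCoeff hn, stepLength]
  field_simp
  norm_num

lemma integral_locCoeff_nonneg (n m k : ℕ) {h : ℝ} (hh : 0 ≤ h) :
    0 ≤ ∫ u in (0 : ℝ)..h, locCoeff n m k u :=
  intervalIntegral.integral_nonneg hh fun u _ => locCoeff_nonneg n m k u

namespace IsModerateWeight

variable {n m : ℕ} {w : ℝ → ℝ} {T : ℝ → ℂ} {p : ℝ≥0∞}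

lemma continuous_mul_norm (hw : IsModerateWeight n m w) (hT : T ∈ trigPoly n) :
    Continuous fun θ => w θ * ‖T θ‖ :=
  hw.continuous.mul (continuous_of_mem_trigPoly hT).norm

lemma periodic_mul_norm (hw : IsModerateWeight n m w) (hT : T ∈ trigPoly n) :
    Function.Periodic (fun θ => w θ * ‖T θ‖) (2 * π) := fun θ => by
  simp only [hw.periodic θ, periodic_of_mem_trigPoly hT θ]

theorem periodNorm_deriv_le (hw : IsModerateWeight n m w) (hp : 1 ≤ p) (hn : n ≠ 0)
    (hT : T ∈ trigPoly n) :
    periodNorm p w (deriv T) ≤ ENNReal.ofReal (2 * (m + 1) * 3 ^ m * n) * periodNorm p w T := by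
  rw [← sum_locCoeff hn m 0]
  refine le_trans (eLpNorm_mono_real fun θ => ?_) (eLpNorm_sum_translates_le hp
    (hw.continuous_mul_norm hT) (hw.periodic_mul_norm hT) (fun k => locCoeff_nonneg n m k 0)
    (locNode n m) _)
  rw [norm_of_nonneg (mul_nonneg (hw.nonneg θ) (norm_nonneg _))]
  exact hw.mul_norm_deriv_le hn hT θ

-- The sum over the translates has total mass `1 / 2`, so it is absorbed by the left-hand side.
lemma periodNorm_le_of_le_add (hw : IsModerateWeight n m w) (hp : 1 ≤ p) (hn : n ≠ 0)
    (hT : T ∈ trigPoly n) {g : ℝ → ℝ} (hg : Continuous g)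
    (hle : ∀ θ, w θ * ‖T θ‖ ≤ g θ + ∑ k ∈ Finset.range (4 * ((m + 1) * n)),
      (∫ u in (0 : ℝ)..stepLength n m, locCoeff n m k u) *
        (w (θ + locNode n m k) * ‖T (θ + locNode n m k)‖)) :
    periodNorm p w T ≤ ENNReal.ofReal 2 * eLpNorm g p periodMeasure := by
  set R : ℝ → ℝ := fun θ => ∑ k ∈ Finset.range (4 * ((m + 1) * n)),
    (∫ u in (0 : ℝ)..stepLength n m, locCoeff n m k u) *
      (w (θ + locNode n m k) * ‖T (θ + locNode n m k)‖)
  have hRc : Continuous R := continuous_finsetSum _ fun k _ =>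
    ((hw.continuous_mul_norm hT).comp (continuous_add_const _)).const_mul _
  have hR : eLpNorm R p periodMeasure ≤ ENNReal.ofReal (1 / 2) * periodNorm p w T := by
    rw [← sum_integral_locCoeff_stepLength hn m]
    exact eLpNorm_sum_translates_le hp (hw.continuous_mul_norm hT) (hw.periodic_mul_norm hT)
      (fun k => integral_locCoeff_nonneg n m k (stepLength_pos hn m).le) (locNode n m) _
  refine le_two_mul_of_le_add_half_mul
    (eLpNorm_periodMeasure_ne_top (hw.continuous_mul_norm hT) p) ?_
  calc periodNorm p w T
      ≤ eLpNorm (g + R) p periodMeasure := eLpNorm_mono_real fun θ => by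
        rw [norm_of_nonneg (mul_nonneg (hw.nonneg θ) (norm_nonneg _))]
        exact hle θ
    _ ≤ eLpNorm g p periodMeasure + eLpNorm R p periodMeasure :=
        eLpNorm_add_le hg.aestronglyMeasurable hRc.aestronglyMeasurable hp
    _ ≤ _ := by gcongr

theorem periodNorm_le_of_le_or_le_shift (hw : IsModerateWeight n m w) (hp : 1 ≤ p) (hn : n ≠ 0)
    {v : ℝ → ℝ} (hv : ∀ θ, 0 ≤ v θ) (hvc : Continuous v) (hvper : Function.Periodic v (2 * π))
    {K : ℝ} (hK : 0 ≤ K) (hwv : ∀ θ, w θ ≤ K * v θ ∨ w θ ≤ K * v (θ + stepLength n m))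
    (hT : T ∈ trigPoly n) :
    periodNorm p w T ≤ ENNReal.ofReal (4 * K) * periodNorm p v T := by
  set h := stepLength n m
  have hh : 0 ≤ h := (stepLength_pos hn m).le
  set g : ℝ → ℝ := fun θ => v θ * ‖T θ‖
  have hg : Continuous g := hvc.mul (continuous_of_mem_trigPoly hT).norm
  have hgper : Function.Periodic g (2 * π) := fun θ => by
    simp only [g, hvper θ, periodic_of_mem_trigPoly hT θ]
  have hg0 (θ : ℝ) : 0 ≤ K * g θ := mul_nonneg hK (mul_nonneg (hv θ) (norm_nonneg _))
  have hnorm : eLpNorm (fun θ => K * g θ + K * g (θ + h)) p periodMeasure ≤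
      ENNReal.ofReal (K + K) * periodNorm p v T := by
    change _ ≤ _ * eLpNorm g p periodMeasure
    simpa only [Fin.sum_univ_two, Matrix.cons_val_zero, Matrix.cons_val_one, add_zero] using
      eLpNorm_sum_translates_le hp hg hgper (c := fun _ : Fin 2 => K) (fun _ => hK) ![0, h]
        Finset.univ
  have hle : periodNorm p w T ≤
      ENNReal.ofReal 2 * eLpNorm (fun θ => K * g θ + K * g (θ + h)) p periodMeasure := by
    refine hw.periodNorm_le_of_le_add hp hn hT (by fun_prop) fun θ => ?_
    have hR : 0 ≤ ∑ k ∈ Finset.range (4 * ((m + 1) * n)), (∫ u in (0 : ℝ)..h,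
        locCoeff n m k u) * (w (θ + locNode n m k) * ‖T (θ + locNode n m k)‖) :=
      Finset.sum_nonneg fun k _ => mul_nonneg (integral_locCoeff_nonneg n m k hh)
        (mul_nonneg (hw.nonneg _) (norm_nonneg _))
    rcases hwv θ with hθ | hθ
    · have := mul_le_mul_of_nonneg_right hθ (norm_nonneg (T θ))
      linarith [hg0 (θ + h)]
    · have := mul_le_mul_of_nonneg_right hθ (norm_nonneg (T (θ + h)))
      linarith [hg0 θ, hw.mul_norm_le_add hn hT θ hh]
  convert le_ofReal_mul_trans zero_le_two hle hnorm using 3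
  ring

lemma le_two_pow_mul_shift (hw : IsModerateWeight n m w) (θ : ℝ) {t : ℝ}
    (ht : n * |t| ≤ 1) : w θ ≤ 2 ^ m * w (θ + t) := by
  have hwt := hw.nonneg (θ + t)
  refine (hw.le_shift θ t).trans ?_
  gcongr
  have := mul_le_mul_of_nonneg_left abs_sin_le_abs (n.cast_nonneg (α := ℝ)) (b := |sin t|)
  linarith

lemma half_le_two_pow_mul_of_isMax (hw : IsModerateWeight n m w) (hn : n ≠ 0)
    (hT : T ∈ trigPoly n) {x : ℝ} (hx : ∀ θ, w θ * ‖T θ‖ ≤ w x * ‖T x‖) {h : ℝ} (hh : 0 ≤ h)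
    (hstep : h ≤ stepLength n m) :
    w x * ‖T x‖ / 2 ≤ 2 ^ m * (w (x + h) * ‖T (x + h)‖) := by
  set G := w x * ‖T x‖
  have hG : 0 ≤ G := mul_nonneg (hw.nonneg x) (norm_nonneg _)
  have hR : ∑ k ∈ Finset.range (4 * ((m + 1) * n)), (∫ u in (0 : ℝ)..h, locCoeff n m k u) *
      (w (x + locNode n m k) * ‖T (x + locNode n m k)‖) ≤ 1 / 2 * G :=
    calc _ ≤ ∑ k ∈ Finset.range (4 * ((m + 1) * n)), (∫ u in (0 : ℝ)..h, locCoeff n m k u) * G :=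
          Finset.sum_le_sum fun k _ =>
            mul_le_mul_of_nonneg_left (hx _) (integral_locCoeff_nonneg n m k hh)
      _ = 2 * (m + 1) * 3 ^ m * n * h * G := by rw [← Finset.sum_mul, sum_integral_locCoeff hn]
      _ ≤ 2 * (m + 1) * 3 ^ m * n * stepLength n m * G := by gcongr
      _ = 1 / 2 * G := by
          rw [← sum_integral_locCoeff hn m, sum_integral_locCoeff_stepLength hn]
  have hw2 : w x ≤ 2 ^ m * w (x + h) := hw.le_two_pow_mul_shift x <| by
    rw [abs_of_nonneg hh]
    exact (by gcongr : n * h ≤ n * stepLength n m).trans (natCast_mul_stepLength_le_one n m)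
  have := mul_le_mul_of_nonneg_right hw2 (norm_nonneg (T (x + h)))
  linarith [hw.mul_norm_le_add hn hT x hh]

lemma exists_isMax (hw : IsModerateWeight n m w) (hT : T ∈ trigPoly n) :
    ∃ x, ∀ θ, w θ * ‖T θ‖ ≤ w x * ‖T x‖ := by
  obtain ⟨x, -, hmax⟩ := isCompact_Icc.exists_isMaxOn (nonempty_Icc.2 two_pi_pos.le)
    (hw.continuous_mul_norm hT).continuousOn
  refine ⟨x, fun θ => ?_⟩
  obtain ⟨y, hy, hyθ⟩ := (hw.periodic_mul_norm hT).exists_mem_Ico₀ two_pi_pos θ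
  exact hyθ.trans_le (hmax (Ico_subset_Icc_self hy))

theorem mul_norm_le_periodNorm (hw : IsModerateWeight n m w) (hp : p ≠ 0) (hp' : p ≠ ⊤)
    (hn : n ≠ 0) (hT : T ∈ trigPoly n) (θ : ℝ) :
    w θ * ‖T θ‖ ≤
      2 ^ (m + 1) * (4 * (m + 1) * 3 ^ m * n) ^ (1 / p.toReal) * (periodNorm p w T).toReal := by
  obtain ⟨x, hx⟩ := hw.exists_isMax hT
  refine (hx θ).trans ?_
  set G := w x * ‖T x‖
  have hG : 0 ≤ G := mul_nonneg (hw.nonneg x) (norm_nonneg _)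
  set h := stepLength n m
  have hh : 0 < h := stepLength_pos hn m
  have hlower : eLpNorm (fun _ : ℝ => G / 2 ^ (m + 1)) p (volume.restrict (Ioc x (x + h))) ≤
      periodNorm p w T := by
    rw [periodNorm, eLpNorm_periodMeasure_eq (hw.continuous_mul_norm hT)
      (hw.periodic_mul_norm hT) p x]
    refine le_trans (eLpNorm_mono_ae_real ?_) (eLpNorm_mono_measure _ (Measure.restrict_mono
      (Ioc_subset_Ioc_right ?_) le_rfl))
    · filter_upwards [ae_restrict_mem measurableSet_Ioc] with y hy
      have := hw.half_le_two_pow_mul_of_isMax hn hT hx (h := y - x) (by linarith [hy.1])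
        (by linarith [hy.2])
      rw [add_sub_cancel] at this
      rw [norm_of_nonneg (by positivity), pow_succ', ← div_div, div_le_iff₀' (by positivity)]
      exact this
    · linarith [stepLength_le_one hn m, pi_gt_three]
  have hfin : periodNorm p w T ≠ ⊤ := eLpNorm_periodMeasure_ne_top (hw.continuous_mul_norm hT) p
  rw [eLpNorm_const' _ hp hp', Measure.restrict_apply_univ, Real.volume_Ioc, add_sub_cancel_left,
    Real.enorm_eq_ofReal (by positivity), ENNReal.ofReal_rpow_of_pos hh,
    ← ENNReal.ofReal_mul (by positivity), ENNReal.ofReal_le_iff_le_toReal hfin] at hlower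
  have hinv : (4 * (m + 1) * 3 ^ m * n : ℝ) = h⁻¹ := by simp [h, stepLength]
  rw [hinv, inv_rpow hh.le, mul_assoc, ← div_le_iff₀' (by positivity),
    le_inv_mul_iff₀' (by positivity)]
  exact hlower

end IsModerateWeight

/-! ### Powers of the sine -/

lemma rpow_le_rpow_abs_mul_rpow {x y z : ℝ} (hx : 0 < x) (hy : 0 < y) (hz : 0 < z)
    (hxy : x ≤ z * y) (hyx : y ≤ z * x) (β : ℝ) : x ^ β ≤ z ^ |β| * y ^ β := by
  rcases le_total 0 β with hβ | hβ
  · rw [abs_of_nonneg hβ, ← mul_rpow hz.le hy.le]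
    exact rpow_le_rpow hx.le hxy hβ
  · have h := rpow_le_rpow_of_nonpos hy hyx hβ
    rwa [abs_of_nonpos hβ, rpow_neg hz.le, inv_mul_eq_div, le_div_iff₀' (by positivity),
      ← mul_rpow hz.le hx.le]

lemma abs_sin_le_abs_sin_add (θ t : ℝ) : |sin θ| ≤ |sin (θ + t)| + |sin t| := by
  have h : sin θ = sin (θ + t) * cos t - cos (θ + t) * sin t := by
    rw [← sin_sub, add_sub_cancel_right]
  calc |sin θ| ≤ |sin (θ + t)| * |cos t| + |cos (θ + t)| * |sin t| := by
        rw [h, ← abs_mul, ← abs_mul]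
        exact abs_sub _ _
    _ ≤ |sin (θ + t)| * 1 + 1 * |sin t| := by
        gcongr <;> exact abs_cos_le_one _
    _ = |sin (θ + t)| + |sin t| := by ring

/-- The weight `|sin θ| ^ β`, regularised near the zeros of the sine by the parameter `ε`. -/
def sinWeight (ε β θ : ℝ) : ℝ := (|sin θ| + ε) ^ β

lemma sinWeight_nonneg {ε : ℝ} (hε : 0 ≤ ε) (β θ : ℝ) : 0 ≤ sinWeight ε β θ := by
  unfold sinWeight
  positivity

lemma sinWeight_periodic (ε β : ℝ) : Function.Periodic (sinWeight ε β) (2 * π) := fun θ => by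
  simp only [sinWeight, sin_add_two_pi]

lemma continuous_sinWeight {ε β : ℝ} (h : 0 < ε ∨ 0 ≤ ε ∧ 0 ≤ β) : Continuous (sinWeight ε β) :=
  (continuous_sin.abs.add continuous_const).rpow_const fun _ =>
    h.imp (fun hε => (add_pos_of_nonneg_of_pos (abs_nonneg _) hε).ne') And.right

lemma abs_sin_add_one_div_le {n : ℕ} (hn : n ≠ 0) (θ t : ℝ) :
    |sin θ| + 1 / n ≤ (1 + n * |sin t|) * (|sin (θ + t)| + 1 / n) := by
  have h : (1 + n * |sin t|) * (|sin (θ + t)| + 1 / n) =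
      |sin (θ + t)| + |sin t| + 1 / n + n * (|sin t| * |sin (θ + t)|) := by
    field_simp
    ring
  have : 0 ≤ n * (|sin t| * |sin (θ + t)|) := by positivity
  linarith [abs_sin_le_abs_sin_add θ t]

theorem isModerateWeight_sinWeight {n m : ℕ} (hn : n ≠ 0) {β : ℝ} (hβ : |β| ≤ m) :
    IsModerateWeight n m (sinWeight (1 / n) β) where
  nonneg := sinWeight_nonneg (by positivity) β
  continuous := continuous_sinWeight (.inl (by positivity))
  le_shift θ t := by
    have hback := abs_sin_add_one_div_le hn (θ + t) (-t)
    rw [sin_neg, abs_neg, add_neg_cancel_right] at hback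
    refine (rpow_le_rpow_abs_mul_rpow (by positivity) (by positivity) (by positivity)
      (abs_sin_add_one_div_le hn θ t) hback β).trans ?_
    have hone : 1 ≤ 1 + n * |sin t| := le_add_of_nonneg_right (by positivity)
    refine mul_le_mul_of_nonneg_right ?_ (sinWeight_nonneg (by positivity) β _)
    rw [← rpow_natCast]
    exact rpow_le_rpow_of_exponent_le hone hβ

lemma one_div_eq_mul_stepLength (n m : ℕ) :
    1 / (n : ℝ) = 4 * (m + 1) * 3 ^ m * stepLength n m := by
  rw [stepLength]
  field_simp

lemma stepLength_le_pi_mul_max {n : ℕ} (hn : n ≠ 0) (m : ℕ) (θ : ℝ) :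
    stepLength n m ≤ π * max |sin θ| |sin (θ + stepLength n m)| := by
  set h := stepLength n m
  have hsin : 2 / π * h ≤ |sin h| := (mul_le_sin (stepLength_pos hn m).le
    (by linarith [stepLength_le_one hn m, pi_gt_three])).trans (le_abs_self _)
  have hadd := abs_sin_le_abs_sin_add h θ
  rw [add_comm h] at hadd
  have hsum : 2 / π * h ≤ 2 * max |sin θ| |sin (θ + h)| := by
    linarith [le_max_left |sin θ| |sin (θ + h)|, le_max_right |sin θ| |sin (θ + h)|]
  rw [div_mul_eq_mul_div, div_le_iff₀ pi_pos] at hsum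
  linarith

lemma sinWeight_one_div_le_or_le_shift {n : ℕ} (hn : n ≠ 0) (m : ℕ) {β : ℝ} (hβ : 0 ≤ β)
    (θ : ℝ) :
    sinWeight (1 / n) β θ ≤ (1 + 4 * (m + 1) * 3 ^ m * π) ^ β * sinWeight 0 β θ ∨
      sinWeight (1 / n) β θ ≤
        (1 + 4 * (m + 1) * 3 ^ m * π) ^ β * sinWeight 0 β (θ + stepLength n m) := by
  have hbase : |sin θ| + 1 / n ≤ (1 + 4 * (m + 1) * 3 ^ m * π) *
      max |sin θ| |sin (θ + stepLength n m)| := by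
    have h := mul_le_mul_of_nonneg_left (stepLength_le_pi_mul_max hn m θ)
      (by positivity : (0 : ℝ) ≤ 4 * (m + 1) * 3 ^ m)
    rw [one_div_eq_mul_stepLength n m]
    linarith [le_max_left |sin θ| |sin (θ + stepLength n m)|]
  have hpow := rpow_le_rpow (by positivity) hbase hβ
  rw [mul_rpow (by positivity) (by positivity)] at hpow
  simp only [sinWeight, add_zero]
  rcases max_choice |sin θ| |sin (θ + stepLength n m)| with hmax | hmax <;> rw [hmax] at hpow
  · exact .inl hpow
  · exact .inr hpow

lemma ae_sin_ne_zero : ∀ᵐ θ : ℝ, sin θ ≠ 0 := by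
  filter_upwards [(countable_range fun k : ℤ => (k : ℝ) * π).ae_notMem volume] with θ hθ hsin
  exact hθ (sin_eq_zero_iff.1 hsin)

theorem exists_periodNorm_sinWeight_one_div_le {p : ℝ≥0∞} (hp : 1 ≤ p) (β : ℝ) :
    ∃ C > 0, ∀ n : ℕ, n ≠ 0 → ∀ T ∈ trigPoly n, periodNorm p (sinWeight (1 / n) β) T ≤
      ENNReal.ofReal C * periodNorm p (sinWeight 0 β) T := by
  rcases le_or_gt 0 β with hβ | hβ
  · set m := ⌈|β|⌉₊
    refine ⟨4 * (1 + 4 * (m + 1) * 3 ^ m * π) ^ β, by positivity, fun n hn T hT => ?_⟩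
    exact (isModerateWeight_sinWeight hn (Nat.le_ceil _)).periodNorm_le_of_le_or_le_shift hp hn
      (sinWeight_nonneg le_rfl β) (continuous_sinWeight (.inr ⟨le_rfl, hβ⟩))
      (sinWeight_periodic 0 β) (by positivity) (sinWeight_one_div_le_or_le_shift hn m hβ) hT
  · refine ⟨1, one_pos, fun n _ T _ => ?_⟩
    rw [ENNReal.ofReal_one, one_mul]
    refine eLpNorm_mono_ae_real ?_
    filter_upwards [ae_restrict_of_ae ae_sin_ne_zero] with θ hθ
    rw [norm_of_nonneg (mul_nonneg (sinWeight_nonneg (by positivity) β θ) (norm_nonneg _))]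
    refine mul_le_mul_of_nonneg_right ?_ (norm_nonneg _)
    refine rpow_le_rpow_of_nonpos ?_ ?_ hβ.le
    · simpa using hθ
    · rw [add_zero]
      exact le_add_of_nonneg_right (by positivity)

lemma eLpNorm_restrict_union_le {X E : Type*} [MeasurableSpace X] [NormedAddCommGroup E]
    {μ : Measure X} {p : ℝ≥0∞} (hp : 1 ≤ p) {f : X → E} (hf : AEStronglyMeasurable f μ)
    {s t : Set X} (hs : MeasurableSet s) (ht : MeasurableSet t) :
    eLpNorm f p (μ.restrict (s ∪ t)) ≤
      eLpNorm f p (μ.restrict s) + eLpNorm f p (μ.restrict t) := by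
  rw [← union_sdiff_self, ← eLpNorm_indicator_eq_eLpNorm_restrict (hs.union (ht.diff hs)),
    indicator_union_of_disjoint disjoint_sdiff_right]
  refine (eLpNorm_add_le (hf.indicator hs) (hf.indicator (ht.diff hs)) hp).trans ?_
  rw [eLpNorm_indicator_eq_eLpNorm_restrict hs, eLpNorm_indicator_eq_eLpNorm_restrict (ht.diff hs)]
  gcongr
  exact sdiff_subset

lemma eLpNorm_periodMeasure_le_of_even {p : ℝ≥0∞} (hp : 1 ≤ p) {g : ℝ → ℝ} (hg : Measurable g)
    (heven : Function.Even g) :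
    eLpNorm g p periodMeasure ≤ ENNReal.ofReal 2 * eLpNorm g p (volume.restrict (Ioo 0 π)) := by
  have hneg : MeasurePreserving (fun θ : ℝ => -θ) (volume.restrict (Ioo 0 π))
      (volume.restrict (Ioo (-π) 0)) := by
    have h := (Measure.measurePreserving_neg (volume : Measure ℝ)).restrict_preimage
      (s := Ioo (-π) 0) measurableSet_Ioo
    rwa [neg_preimage, neg_Ioo, neg_zero, neg_neg] at h
  have hleft : eLpNorm g p (volume.restrict (Ioc (-π) 0)) =
      eLpNorm g p (volume.restrict (Ioo 0 π)) := by
    rw [← Measure.restrict_congr_set Ioo_ae_eq_Ioc,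
      ← eLpNorm_comp_measurePreserving hg.aestronglyMeasurable hneg]
    exact congrArg (eLpNorm · p _) (funext heven)
  rw [periodMeasure, ← Ioc_union_Ioc_eq_Ioc (neg_nonpos.2 pi_pos.le) pi_pos.le]
  refine (eLpNorm_restrict_union_le hp hg.aestronglyMeasurable measurableSet_Ioc
    measurableSet_Ioc).trans_eq ?_
  rw [hleft, Measure.restrict_congr_set (Ioo_ae_eq_Ioc (a := (0 : ℝ))).symm, ← two_mul]
  norm_num

section NegativeExponent

variable {p : ℝ≥0∞} {β : ℝ}

lemma mul_toReal_add_one_pos (hp : p ≠ 0) (hp' : p ≠ ⊤) (hβ : -(1 / p.toReal) < β) :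
    0 < β * p.toReal + 1 := by
  have hP : 0 < p.toReal := ENNReal.toReal_pos hp hp'
  have h := mul_pos (neg_lt_iff_pos_add.1 hβ) hP
  rwa [add_mul, one_div_mul_cancel hP.ne'] at h

lemma eLpNorm_rpow_restrict_Ioc (hp : p ≠ 0) (hp' : p ≠ ⊤) (hβ : -(1 / p.toReal) < β) {a : ℝ}
    (ha : 0 < a) :
    eLpNorm (fun t => t ^ β) p (volume.restrict (Ioc 0 a)) =
      ENNReal.ofReal (a ^ (β + 1 / p.toReal) / (β * p.toReal + 1) ^ (1 / p.toReal)) := by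
  have hP : 0 < p.toReal := ENNReal.toReal_pos hp hp'
  have hr := mul_toReal_add_one_pos hp hp' hβ
  have hrpow : IntervalIntegrable (fun t : ℝ => t ^ (β * p.toReal)) volume 0 a :=
    intervalIntegral.intervalIntegrable_rpow' (by linarith)
  have hpow : ∫⁻ t in Ioc 0 a, ‖t ^ β‖ₑ ^ p.toReal =
      ∫⁻ t in Ioc 0 a, ENNReal.ofReal (t ^ (β * p.toReal)) := by
    refine setLIntegral_congr_fun measurableSet_Ioc fun t ht => ?_
    have ht0 : 0 ≤ t := ht.1.le
    rw [Real.enorm_eq_ofReal (by positivity), ENNReal.ofReal_rpow_of_nonneg (by positivity) hP.le,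
      rpow_mul ht0]
  rw [eLpNorm_eq_lintegral_rpow_enorm_toReal hp hp', hpow, ← ofReal_integral_eq_lintegral_ofReal
      ((intervalIntegrable_iff_integrableOn_Ioc_of_le ha.le).1 hrpow)
      ((ae_restrict_mem measurableSet_Ioc).mono fun t ht => rpow_nonneg ht.1.le _),
    ← intervalIntegral.integral_of_le ha.le, integral_rpow (.inl (by linarith)),
    zero_rpow hr.ne', sub_zero, ENNReal.ofReal_rpow_of_nonneg (by positivity) (by positivity),
    div_rpow (by positivity) hr.le, ← rpow_mul ha.le, add_mul, one_mul, mul_assoc,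
    mul_one_div_cancel hP.ne', mul_one]

/-- The part of the weight `|sin θ| ^ β` living where `|sin θ| ≤ ε`. -/
def sinPeak (ε β : ℝ) : ℝ → ℝ := {θ | |sin θ| ≤ ε}.indicator (sinWeight 0 β)

lemma sinPeak_nonneg (ε β θ : ℝ) : 0 ≤ sinPeak ε β θ :=
  indicator_nonneg (fun _ _ => sinWeight_nonneg le_rfl _ _) _

lemma measurable_sinPeak (ε β : ℝ) : Measurable (sinPeak ε β) := by
  have hw : Measurable (sinWeight 0 β) := by
    unfold sinWeight
    fun_prop
  exact hw.indicator (measurableSet_le (by fun_prop) measurable_const)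

lemma sinPeak_even (ε β : ℝ) : Function.Even (sinPeak ε β) := fun θ => by
  simp [sinPeak, indicator, sinWeight]

lemma sinPeak_le_of_mem_Ioc (hβ : β ≤ 0) (ε : ℝ) {t : ℝ} (ht : t ∈ Ioc 0 (π / 2)) :
    sinPeak ε β t ≤ (2 / π) ^ β * (Ioc 0 (π / 2 * ε)).indicator (fun s => s ^ β) t := by
  have hsin : 2 / π * t ≤ |sin t| := (mul_le_sin ht.1.le ht.2).trans (le_abs_self _)
  have h0 : 0 < 2 / π * t := mul_pos (by positivity) ht.1
  have hind : 0 ≤ (Ioc 0 (π / 2 * ε)).indicator (fun s => s ^ β) t :=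
    indicator_nonneg (fun s hs => rpow_nonneg hs.1.le _) _
  refine indicator_apply_le' (fun hε => ?_) fun _ => by positivity
  have hmem : t ∈ Ioc 0 (π / 2 * ε) := by
    refine ⟨ht.1, ?_⟩
    calc t = π / 2 * (2 / π * t) := by field_simp
      _ ≤ π / 2 * ε := by gcongr; exact hsin.trans hε
  rw [indicator_of_mem hmem, ← mul_rpow (by positivity) ht.1.le, sinWeight, add_zero]
  exact rpow_le_rpow_of_nonpos h0 hsin hβ

lemma sinPeak_le_add_of_mem_Ioo (hβ : β ≤ 0) (ε : ℝ) {θ : ℝ} (hθ : θ ∈ Ioo 0 π) :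
    sinPeak ε β θ ≤ (2 / π) ^ β * ((Ioc 0 (π / 2 * ε)).indicator (fun s => s ^ β) θ +
      (Ioc 0 (π / 2 * ε)).indicator (fun s => s ^ β) (π - θ)) := by
  have hind (t : ℝ) : 0 ≤ (2 / π) ^ β * (Ioc 0 (π / 2 * ε)).indicator (fun s => s ^ β) t :=
    mul_nonneg (by positivity) (indicator_nonneg (fun s hs => rpow_nonneg hs.1.le _) _)
  rw [mul_add]
  rcases le_or_gt θ (π / 2) with hle | hgt
  · exact le_add_of_le_of_nonneg (sinPeak_le_of_mem_Ioc hβ ε ⟨hθ.1, hle⟩) (hind _)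
  · have hsymm : sinPeak ε β θ = sinPeak ε β (π - θ) := by
      simp [sinPeak, indicator, sinWeight]
    rw [hsymm]
    exact le_add_of_nonneg_of_le (hind _)
      (sinPeak_le_of_mem_Ioc hβ ε ⟨by linarith [hθ.2], by linarith⟩)

lemma eLpNorm_add_comp_const_sub_le (hp : 1 ≤ p) {φ : ℝ → ℝ} (hφ : Measurable φ) (c : ℝ) :
    eLpNorm (fun θ => φ θ + φ (c - θ)) p volume ≤ ENNReal.ofReal 2 * eLpNorm φ p volume := by
  have hrefl : eLpNorm (fun θ => φ (c - θ)) p volume = eLpNorm φ p volume :=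
    eLpNorm_comp_measurePreserving hφ.aestronglyMeasurable
      (Measure.measurePreserving_sub_left volume c)
  refine (eLpNorm_add_le (g := fun θ => φ (c - θ)) hφ.aestronglyMeasurable
    (hφ.comp (measurable_const.sub measurable_id)).aestronglyMeasurable hp).trans_eq ?_
  rw [hrefl, ← two_mul]
  norm_num

lemma exists_eLpNorm_sinPeak_le (hp : 1 ≤ p) (hp' : p ≠ ⊤) (hβ : -(1 / p.toReal) < β)
    (hβ0 : β ≤ 0) :
    ∃ K > 0, ∀ ε > 0, eLpNorm (sinPeak ε β) p periodMeasure ≤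
      ENNReal.ofReal (K * ε ^ (β + 1 / p.toReal)) := by
  have hp0 : p ≠ 0 := (zero_lt_one.trans_le hp).ne'
  have hr := mul_toReal_add_one_pos hp0 hp' hβ
  refine ⟨4 * (2 / π) ^ β * ((π / 2) ^ (β + 1 / p.toReal) /
    (β * p.toReal + 1) ^ (1 / p.toReal)), by positivity, fun ε hε => ?_⟩
  set φ := (Ioc 0 (π / 2 * ε)).indicator fun s : ℝ => s ^ β
  have hφ : Measurable φ := (measurable_id.pow_const β).indicator measurableSet_Ioc
  have hhalf : eLpNorm (sinPeak ε β) p (volume.restrict (Ioo 0 π)) ≤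
      ENNReal.ofReal ((2 / π) ^ β * 2) * eLpNorm φ p volume := by
    refine le_ofReal_mul_trans (by positivity) ?_ (eLpNorm_add_comp_const_sub_le hp hφ π)
    rw [← Real.enorm_eq_ofReal (by positivity), ← eLpNorm_const_smul]
    refine le_trans (eLpNorm_mono_ae_real ?_) (eLpNorm_mono_measure _ Measure.restrict_le_self)
    filter_upwards [ae_restrict_mem measurableSet_Ioo] with θ hθ
    rw [norm_of_nonneg (sinPeak_nonneg _ _ _)]
    exact sinPeak_le_add_of_mem_Ioo hβ0 ε hθ
  refine (le_ofReal_mul_trans zero_le_two (eLpNorm_periodMeasure_le_of_even hp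
    (measurable_sinPeak ε β) (sinPeak_even ε β)) hhalf).trans_eq ?_
  rw [eLpNorm_indicator_eq_eLpNorm_restrict measurableSet_Ioc,
    eLpNorm_rpow_restrict_Ioc hp0 hp' hβ (by positivity), ← ENNReal.ofReal_mul (by positivity),
    mul_rpow (by positivity) hε.le]
  ring_nf

lemma sinWeight_zero_le_add_sinPeak (hβ : β ≤ 0) {ε : ℝ} (hε : 0 < ε) (θ : ℝ) :
    sinWeight 0 β θ ≤ 2 ^ (-β) * sinWeight ε β θ + sinPeak ε β θ := by
  have hw := sinWeight_nonneg hε.le β θ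
  rcases le_or_gt |sin θ| ε with h | h
  · rw [sinPeak, indicator_of_mem (s := {θ | |sin θ| ≤ ε}) h]
    exact le_add_of_nonneg_left (by positivity)
  · have hsin : 0 < |sin θ| := hε.trans h
    have hpow : (2 * |sin θ|) ^ β ≤ (|sin θ| + ε) ^ β :=
      rpow_le_rpow_of_nonpos (by positivity) (by linarith) hβ
    rw [mul_rpow zero_le_two hsin.le, ← le_inv_mul_iff₀ (by positivity),
      ← rpow_neg zero_le_two] at hpow
    refine le_add_of_le_of_nonneg ?_ (sinPeak_nonneg _ _ _)
    simpa only [sinWeight, add_zero] using hpow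

lemma sinPeak_mul_le (hβ : β ≤ 0) {ε : ℝ} (hε : 0 < ε) {θ x G : ℝ} (hx : 0 ≤ x)
    (hG : sinWeight ε β θ * x ≤ G) :
    sinPeak ε β θ * x ≤ (2 * ε) ^ (-β) * G * sinPeak ε β θ := by
  by_cases h : |sin θ| ≤ ε
  · have hlow : (2 * ε) ^ β ≤ sinWeight ε β θ :=
      rpow_le_rpow_of_nonpos (by positivity) (by linarith) hβ
    have hxG : x ≤ (2 * ε) ^ (-β) * G := by
      rw [rpow_neg (by positivity), le_inv_mul_iff₀ (by positivity)]
      exact (mul_le_mul_of_nonneg_right hlow hx).trans hG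
    rw [mul_comm]
    exact mul_le_mul_of_nonneg_right hxG (sinPeak_nonneg _ _ _)
  · simp [sinPeak, h]

lemma exists_eLpNorm_sinPeak_mul_le (hp : 1 ≤ p) (hp' : p ≠ ⊤) (hβ : -(1 / p.toReal) < β)
    (hβ0 : β ≤ 0) :
    ∃ C > 0, ∀ n : ℕ, n ≠ 0 → ∀ T ∈ trigPoly n, periodNorm p (sinPeak (1 / n) β) T ≤
      ENNReal.ofReal C * periodNorm p (sinWeight (1 / n) β) T := by
  obtain ⟨K, hK, hpeak⟩ := exists_eLpNorm_sinPeak_le hp hp' hβ hβ0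
  set m := ⌈|β|⌉₊
  set D : ℝ := 4 * (m + 1) * 3 ^ m
  refine ⟨2 ^ (-β) * 2 ^ (m + 1) * D ^ (1 / p.toReal) * K, by positivity, fun n hn T hT => ?_⟩
  have hw : IsModerateWeight n m (sinWeight (1 / n) β) :=
    isModerateWeight_sinWeight hn (Nat.le_ceil _)
  have hε : (0 : ℝ) < 1 / n := by positivity
  set N := periodNorm p (sinWeight (1 / n) β) T
  have hN : ENNReal.ofReal N.toReal = N :=
    ENNReal.ofReal_toReal (eLpNorm_periodMeasure_ne_top (hw.continuous_mul_norm hT) p)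
  set G := 2 ^ (m + 1) * (D * n) ^ (1 / p.toReal) * N.toReal
  have hpoint (θ : ℝ) :
      sinPeak (1 / n) β θ * ‖T θ‖ ≤ (2 * (1 / n)) ^ (-β) * G * sinPeak (1 / n) β θ :=
    sinPeak_mul_le hβ0 hε (norm_nonneg _) (hw.mul_norm_le_periodNorm
      (zero_lt_one.trans_le hp).ne' hp' hn hT θ)
  calc periodNorm p (sinPeak (1 / n) β) T
      ≤ eLpNorm (((2 * (1 / n : ℝ)) ^ (-β) * G) • sinPeak (1 / n) β) p periodMeasure :=
        eLpNorm_mono_real fun θ => by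
          rw [norm_of_nonneg (mul_nonneg (sinPeak_nonneg _ _ _) (norm_nonneg _))]
          exact hpoint θ
    _ ≤ ENNReal.ofReal ((2 * (1 / n : ℝ)) ^ (-β) * G) *
          ENNReal.ofReal (K * (1 / n) ^ (β + 1 / p.toReal)) := by
        rw [eLpNorm_const_smul, Real.enorm_eq_ofReal (by positivity)]
        gcongr
        exact hpeak _ hε
    _ = ENNReal.ofReal (2 ^ (-β) * 2 ^ (m + 1) * D ^ (1 / p.toReal) * K) *
          ENNReal.ofReal N.toReal := by
        have hn0 : (0 : ℝ) < n := by positivity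
        rw [← ENNReal.ofReal_mul (by positivity), ← ENNReal.ofReal_mul (by positivity)]
        simp only [G]
        rw [mul_rpow (by positivity) hn0.le, mul_rpow zero_le_two hε.le, rpow_neg hε.le,
          rpow_add hε, div_rpow zero_le_one hn0.le (1 / p.toReal), one_rpow]
        field_simp
    _ = _ := by rw [hN]

end NegativeExponent

/-! ### Bernstein and Markov inequalities for trigonometric polynomials -/

section TrigonometricInequalities

variable {p : ℝ≥0∞} {β : ℝ}

theorem exists_periodNorm_sinWeight_zero_le (hp : 1 ≤ p)
    (hβ : 0 ≤ β ∨ p ≠ ⊤ ∧ -(1 / p.toReal) < β) :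
    ∃ C > 0, ∀ n : ℕ, n ≠ 0 → ∀ T ∈ trigPoly n, periodNorm p (sinWeight 0 β) T ≤
      ENNReal.ofReal C * periodNorm p (sinWeight (1 / n) β) T := by
  rcases le_or_gt 0 β with hβ0 | hβ0
  · refine ⟨1, one_pos, fun n _ T _ => ?_⟩
    rw [ENNReal.ofReal_one, one_mul]
    refine eLpNorm_mono_real fun θ => ?_
    rw [norm_of_nonneg (mul_nonneg (sinWeight_nonneg le_rfl β θ) (norm_nonneg _))]
    unfold sinWeight
    gcongr
    positivity
  obtain ⟨hp', hβp⟩ := hβ.resolve_left hβ0.not_ge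
  obtain ⟨C, hC, hpeak⟩ := exists_eLpNorm_sinPeak_mul_le hp hp' hβp hβ0.le
  refine ⟨2 ^ (-β) + C, by positivity, fun n hn T hT => ?_⟩
  have hε : (0 : ℝ) < 1 / n := by positivity
  have hTm : Measurable fun θ => ‖T θ‖ := (continuous_of_mem_trigPoly hT).norm.measurable
  have hwm := (continuous_sinWeight (β := β) (.inl hε)).measurable
  calc periodNorm p (sinWeight 0 β) T
      ≤ eLpNorm ((2 : ℝ) ^ (-β) • (fun θ => sinWeight (1 / n) β θ * ‖T θ‖) +
          fun θ => sinPeak (1 / n) β θ * ‖T θ‖) p periodMeasure :=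
        eLpNorm_mono_real fun θ => by
          rw [norm_of_nonneg (mul_nonneg (sinWeight_nonneg le_rfl β θ) (norm_nonneg _))]
          have := mul_le_mul_of_nonneg_right (sinWeight_zero_le_add_sinPeak hβ0.le hε θ)
            (norm_nonneg (T θ))
          simpa only [Pi.add_apply, Pi.smul_apply, smul_eq_mul, add_mul, mul_assoc] using this
    _ ≤ ENNReal.ofReal (2 ^ (-β)) * periodNorm p (sinWeight (1 / n) β) T +
          periodNorm p (sinPeak (1 / n) β) T := by
        rw [periodNorm, ← Real.enorm_eq_ofReal (by positivity), ← eLpNorm_const_smul]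
        exact eLpNorm_add_le ((hwm.mul hTm).const_smul _).aestronglyMeasurable
          ((measurable_sinPeak _ _).mul hTm).aestronglyMeasurable hp
    _ ≤ _ := by
        rw [ENNReal.ofReal_add (by positivity) hC.le, add_mul]
        gcongr
        exact hpeak n hn T hT

theorem exists_periodNorm_deriv_le (hp : 1 ≤ p) (hβ : 0 ≤ β ∨ p ≠ ⊤ ∧ -(1 / p.toReal) < β) :
    ∃ C > 0, ∀ n : ℕ, n ≠ 0 → ∀ T ∈ trigPoly n, periodNorm p (sinWeight 0 β) (deriv T) ≤
      ENNReal.ofReal (C * n) * periodNorm p (sinWeight 0 β) T := by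
  obtain ⟨A, hA, hdown⟩ := exists_periodNorm_sinWeight_zero_le hp hβ
  obtain ⟨B, hB, hup⟩ := exists_periodNorm_sinWeight_one_div_le hp β
  refine ⟨A * (2 * (⌈|β|⌉₊ + 1) * 3 ^ ⌈|β|⌉₊ * B), by positivity, fun n hn T hT => ?_⟩
  have hderiv :=
    (isModerateWeight_sinWeight hn (Nat.le_ceil |β|)).periodNorm_deriv_le hp hn hT
  refine (le_ofReal_mul_trans hA.le (hdown n hn _ (deriv_mem_trigPoly hT))
    (le_ofReal_mul_trans (by positivity) hderiv (hup n hn T hT))).trans_eq ?_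
  ring_nf

lemma sinWeight_one_div_le_rpow_mul {n : ℕ} (hn : n ≠ 0) (β : ℝ) {r : ℝ} (hr : 0 ≤ r) (θ : ℝ) :
    sinWeight (1 / n) β θ ≤ n ^ r * sinWeight (1 / n) (β + r) θ := by
  have hbase : 0 < |sin θ| + 1 / n := by positivity
  have hone : 1 ≤ n * (|sin θ| + 1 / n) := by
    rw [mul_add, mul_one_div_cancel (by positivity)]
    exact le_add_of_nonneg_left (by positivity)
  rw [sinWeight, sinWeight, rpow_add hbase, mul_left_comm, ← mul_rpow n.cast_nonneg hbase.le]
  exact le_mul_of_one_le_right (by positivity) (one_le_rpow hone hr)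

theorem exists_periodNorm_le_rpow_mul (hp : 1 ≤ p) (hβ : 0 ≤ β ∨ p ≠ ⊤ ∧ -(1 / p.toReal) < β)
    {r : ℝ} (hr : 0 ≤ r) :
    ∃ C > 0, ∀ n : ℕ, n ≠ 0 → ∀ T ∈ trigPoly n, periodNorm p (sinWeight 0 β) T ≤
      ENNReal.ofReal (C * n ^ r) * periodNorm p (sinWeight 0 (β + r)) T := by
  obtain ⟨A, hA, hdown⟩ := exists_periodNorm_sinWeight_zero_le hp hβ
  obtain ⟨B, hB, hup⟩ := exists_periodNorm_sinWeight_one_div_le hp (β + r)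
  refine ⟨A * B, by positivity, fun n hn T hT => ?_⟩
  have hgain : periodNorm p (sinWeight (1 / n) β) T ≤
      ENNReal.ofReal (n ^ r) * periodNorm p (sinWeight (1 / n) (β + r)) T := by
    rw [periodNorm, periodNorm, ← Real.enorm_eq_ofReal (by positivity), ← eLpNorm_const_smul]
    refine eLpNorm_mono_real fun θ => ?_
    rw [norm_of_nonneg (mul_nonneg (sinWeight_nonneg (by positivity) β θ) (norm_nonneg _)),
      Pi.smul_apply, smul_eq_mul, ← mul_assoc]
    exact mul_le_mul_of_nonneg_right (sinWeight_one_div_le_rpow_mul hn β hr θ) (norm_nonneg _)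
  refine (le_ofReal_mul_trans hA.le (hdown n hn T hT)
    (le_ofReal_mul_trans (by positivity) hgain (hup n hn T hT))).trans_eq ?_
  ring_nf

end TrigonometricInequalities

/-! ### The substitution `x = cos θ` -/

section ChangeOfVariables

variable {E : Type*} [NormedAddCommGroup E] {s : Set ℝ} {g g' : ℝ → ℝ}

lemma eLpNorm_top_restrict_image (hs : MeasurableSet s)
    (hg : ∀ x ∈ s, HasDerivWithinAt g (g' x) s x) (hinj : InjOn g s) (hg' : ∀ x ∈ s, g' x ≠ 0)
    {f : ℝ → E} (hf : AEStronglyMeasurable f (volume.restrict (g '' s))) :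
    eLpNorm f ⊤ (volume.restrict (g '' s)) = eLpNorm (f ∘ g) ⊤ (volume.restrict s) := by
  have hfderiv (x : ℝ) (hx : x ∈ s) :
      HasFDerivWithinAt g (ContinuousLinearMap.toSpanSingleton ℝ (g' x)) s x :=
    (hg x hx).hasFDerivWithinAt
  have hmap := map_withDensity_abs_det_fderiv_eq_addHaar volume hs.nullMeasurableSet hfderiv hinj
  have hgm : AEMeasurable g (volume.restrict s) :=
    ContinuousOn.aemeasurable (fun x hx => (hg x hx).continuousWithinAt) hs
  rw [← hmap] at hf ⊢
  rw [eLpNorm_map_measure hf (hgm.mono_ac (withDensity_absolutelyContinuous _ _)),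
    eLpNorm_exponent_top, eLpNorm_exponent_top]
  refine le_antisymm (eLpNormEssSup_mono_measure _ (withDensity_absolutelyContinuous _ _))
    (eLpNormEssSup_mono_measure _ (withDensity_absolutelyContinuous'
      (aemeasurable_ofReal_abs_det_fderivWithin volume hs hfderiv) ?_))
  filter_upwards [ae_restrict_mem hs] with x hx
  simp [hg' x hx]

/-- For `p = ⊤` the exponent `1 / p.toReal` is `0`, and the Jacobian factor disappears. -/
lemma eLpNorm_restrict_image [NormedSpace ℝ E] (p : ℝ≥0∞) (hs : MeasurableSet s)
    (hg : ∀ x ∈ s, HasDerivWithinAt g (g' x) s x) (hinj : InjOn g s) (hg' : ∀ x ∈ s, g' x ≠ 0)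
    {f : ℝ → E} (hf : AEStronglyMeasurable f (volume.restrict (g '' s))) :
    eLpNorm f p (volume.restrict (g '' s)) =
      eLpNorm (fun x => |g' x| ^ (1 / p.toReal) • f (g x)) p (volume.restrict s) := by
  rcases eq_or_ne p 0 with rfl | hp
  · simp
  rcases eq_or_ne p ⊤ with rfl | hp'
  · simpa [Function.comp_def] using eLpNorm_top_restrict_image hs hg hinj hg' hf
  have hP : 0 < p.toReal := ENNReal.toReal_pos hp hp'
  rw [eLpNorm_eq_lintegral_rpow_enorm_toReal hp hp', eLpNorm_eq_lintegral_rpow_enorm_toReal hp hp',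
    lintegral_image_eq_lintegral_abs_deriv_mul hs hg hinj]
  congr 2 with x
  rw [enorm_smul, ENNReal.mul_rpow_of_nonneg _ _ hP.le, Real.enorm_eq_ofReal (by positivity),
    ENNReal.ofReal_rpow_of_nonneg (by positivity) hP.le, ← rpow_mul (abs_nonneg _),
    one_div_mul_cancel hP.ne', rpow_one]

end ChangeOfVariables

lemma cos_image_Ioo_zero_pi : cos '' Ioo 0 π = Ioo (-1) 1 := by
  refine (image_subset_iff.2 fun θ hθ => ?_).antisymm fun x hx => ?_
  · have hsin : 0 < sin θ := sin_pos_of_mem_Ioo hθ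
    exact abs_lt.1 ((sq_lt_one_iff_abs_lt_one _).1 (by nlinarith [sin_sq_add_cos_sq θ]))
  · refine ⟨arccos x, ⟨arccos_pos.2 hx.2, (arccos_le_pi x).lt_of_ne fun h => ?_⟩,
      cos_arccos hx.1.le hx.2.le⟩
    exact hx.1.not_ge (arccos_eq_pi.1 h)

lemma wnorm_eq_eLpNorm_comp_cos (p : ℝ≥0∞) (α : ℝ) {f : ℝ → ℝ} (hf : Measurable f) :
    wnorm p α f = eLpNorm (fun θ => sinWeight 0 (2 * α + 1 / p.toReal) θ * f (cos θ)) p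
      (volume.restrict (Ioo 0 π)) := by
  have hmeas : Measurable fun x => f x * (1 - x ^ 2) ^ α := by fun_prop
  rw [wnorm, ← Measure.restrict_congr_set Ioo_ae_eq_Icc, ← cos_image_Ioo_zero_pi,
    eLpNorm_restrict_image p measurableSet_Ioo
      (fun θ _ => (hasDerivAt_cos θ).hasDerivWithinAt) (injOn_cos.mono Ioo_subset_Icc_self)
      (fun θ hθ => neg_ne_zero.2 (sin_pos_of_mem_Ioo hθ).ne') hmeas.aestronglyMeasurable]
  refine eLpNorm_congr_ae ?_
  filter_upwards [ae_restrict_mem measurableSet_Ioo] with θ hθ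
  have hsin : 0 < |sin θ| := abs_pos.2 (sin_pos_of_mem_Ioo hθ).ne'
  rw [abs_neg, ← sin_sq, ← sq_abs, ← rpow_natCast, ← rpow_mul hsin.le, Nat.cast_ofNat, sinWeight,
    add_zero, rpow_add hsin, smul_eq_mul]
  ring

/-- The trigonometric polynomial `θ ↦ q (cos θ)`, complex-valued so as to lie in `trigPoly`. -/
def compCos (q : Polynomial ℝ) (θ : ℝ) : ℂ := ((q.eval (cos θ) : ℝ) : ℂ)

lemma ofReal_cos_mem_trigPoly : (fun θ : ℝ => ((cos θ : ℝ) : ℂ)) ∈ trigPoly 1 := by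
  have h : (fun θ : ℝ => ((cos θ : ℝ) : ℂ)) = (1 / 2 : ℂ) • (expI 1 + expI (-1)) := by
    funext θ
    simp [expI, Complex.cos]
    ring
  rw [h]
  exact Submodule.smul_mem _ _ (Submodule.add_mem _ (expI_mem_trigPoly (by simp))
    (expI_mem_trigPoly (by simp)))

lemma compCos_mem_trigPoly {n : ℕ} {q : Polynomial ℝ} (hq : q.natDegree ≤ n) :
    compCos q ∈ trigPoly n := by
  have h : compCos q = ∑ i ∈ Finset.range (q.natDegree + 1),
      (q.coeff i : ℂ) • (fun θ : ℝ => ((cos θ : ℝ) : ℂ)) ^ i := by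
    funext θ
    simp [compCos, Polynomial.eval_eq_sum_range]
  rw [h]
  refine Submodule.sum_mem _ fun i hi => Submodule.smul_mem _ _ ?_
  have hi' := Finset.mem_range.1 hi
  exact trigPoly_mono (by lia) (pow_mem_trigPoly ofReal_cos_mem_trigPoly i)

lemma norm_deriv_compCos (q : Polynomial ℝ) (θ : ℝ) :
    ‖deriv (compCos q) θ‖ = |sin θ| * |q.derivative.eval (cos θ)| := by
  have h : HasDerivAt (compCos q) _ θ :=
    ((q.hasDerivAt (cos θ)).comp θ (hasDerivAt_cos θ)).ofReal_comp
  rw [h.deriv, Complex.norm_real, Real.norm_eq_abs, abs_mul, abs_neg, mul_comm]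

lemma restrict_Ioo_zero_pi_le_periodMeasure : volume.restrict (Ioo 0 π) ≤ periodMeasure :=
  Measure.restrict_mono_set _ (Ioo_subset_Ioc_self.trans
    (Ioc_subset_Ioc_left (neg_nonpos.2 pi_pos.le)))

lemma wnorm_eval_le_periodNorm (p : ℝ≥0∞) (α : ℝ) (q : Polynomial ℝ) :
    wnorm p α (fun x => q.eval x) ≤
      periodNorm p (sinWeight 0 (2 * α + 1 / p.toReal)) (compCos q) := by
  rw [wnorm_eq_eLpNorm_comp_cos p α q.continuous.measurable]
  refine (eLpNorm_mono fun θ => ?_).trans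
    (eLpNorm_mono_measure _ restrict_Ioo_zero_pi_le_periodMeasure)
  simp [compCos]

lemma periodNorm_compCos_le_wnorm {p : ℝ≥0∞} (hp : 1 ≤ p) (α : ℝ) (q : Polynomial ℝ) :
    periodNorm p (sinWeight 0 (2 * α + 1 / p.toReal)) (compCos q) ≤
      ENNReal.ofReal 2 * wnorm p α (fun x => q.eval x) := by
  rw [wnorm_eq_eLpNorm_comp_cos p α q.continuous.measurable]
  have hmeas : Measurable fun θ =>
      sinWeight 0 (2 * α + 1 / p.toReal) θ * ‖compCos q θ‖ := by
    unfold sinWeight compCos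
    fun_prop
  refine (eLpNorm_periodMeasure_le_of_even hp hmeas fun θ => ?_).trans_eq ?_
  · simp [sinWeight, compCos]
  · congr 1
    exact eLpNorm_congr_norm_ae (.of_forall fun θ => by simp [compCos])

lemma wnorm_eval_derivative_le_periodNorm (p : ℝ≥0∞) (α : ℝ) (q : Polynomial ℝ) :
    wnorm p (α + 1 / 2) (fun x => q.derivative.eval x) ≤
      periodNorm p (sinWeight 0 (2 * α + 1 / p.toReal)) (deriv (compCos q)) := by
  rw [wnorm_eq_eLpNorm_comp_cos p _ q.derivative.continuous.measurable]
  refine le_trans (eLpNorm_mono_ae ?_)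
    (eLpNorm_mono_measure _ restrict_Ioo_zero_pi_le_periodMeasure)
  filter_upwards [ae_restrict_mem measurableSet_Ioo] with θ hθ
  have hsin : |sin θ| ≠ 0 := abs_ne_zero.2 (sin_pos_of_mem_Ioo hθ).ne'
  have hexp : 2 * (α + 1 / 2) + 1 / p.toReal = 2 * α + 1 / p.toReal + 1 := by ring
  rw [norm_deriv_compCos, hexp, sinWeight, sinWeight, add_zero, rpow_add_one hsin, mul_assoc,
    norm_mul, norm_mul, norm_mul, norm_mul, norm_abs_eq_norm, norm_abs_eq_norm]

theorem bernstein_markov (p : ℝ≥0∞) (α ρ : ℝ) (hp : 1 ≤ p)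
    (hα : (p ≠ ⊤ → -(1 / p.toReal) < α) ∧ (p = ⊤ → 0 ≤ α)) (hρ : 0 ≤ ρ) :
    ∃ C₁ > (0 : ℝ), ∃ C₂ > (0 : ℝ), ∀ n : ℕ, 1 ≤ n → ∀ q : Polynomial ℝ,
      q.natDegree ≤ n - 1 →
        wnorm p (α + 1 / 2) (fun x => (Polynomial.derivative q).eval x) ≤
            ENNReal.ofReal (C₁ * n) * wnorm p α (fun x => q.eval x) ∧
        wnorm p α (fun x => q.eval x) ≤
            ENNReal.ofReal (C₂ * (n : ℝ) ^ (2 * ρ)) *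
              wnorm p (α + ρ) (fun x => q.eval x) := by
  have hβ : 0 ≤ 2 * α + 1 / p.toReal ∨ p ≠ ⊤ ∧ -(1 / p.toReal) < 2 * α + 1 / p.toReal := by
    rcases eq_or_ne p ⊤ with rfl | hp'
    · exact .inl (by simpa using hα.2 rfl)
    · exact .inr ⟨hp', by linarith [hα.1 hp']⟩
  have hexp : 2 * (α + ρ) + 1 / p.toReal = 2 * α + 1 / p.toReal + 2 * ρ := by ring
  obtain ⟨B, hB, hbernstein⟩ := exists_periodNorm_deriv_le hp hβ
  obtain ⟨M, hM, hmarkov⟩ := exists_periodNorm_le_rpow_mul hp hβ (by positivity : 0 ≤ 2 * ρ)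
  refine ⟨B * 2, by positivity, M * 2, by positivity, fun n hn q hq => ?_⟩
  have hn0 : n ≠ 0 := Nat.one_le_iff_ne_zero.1 hn
  have hT : compCos q ∈ trigPoly n := compCos_mem_trigPoly (hq.trans n.pred_le)
  rw [mul_right_comm B, mul_right_comm M]
  constructor
  · exact (wnorm_eval_derivative_le_periodNorm p α q).trans (le_ofReal_mul_trans (by positivity)
      (hbernstein n hn0 _ hT) (periodNorm_compCos_le_wnorm hp α q))
  · refine (wnorm_eval_le_periodNorm p α q).trans (le_ofReal_mul_trans (by positivity)
      (hmarkov n hn0 _ hT) ?_)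
    rw [← hexp]
    exact periodNorm_compCos_le_wnorm hp (α + ρ) q
end
end
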